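/- Kallin's Lemma: Let K₁ and K₂ be polynomially convex compact subsets of ℂⁿ, and let p be a holomorphic polynomial on ℂⁿ mapping K₁ onto F₁ and K₂ onto F₂, where F₁ and F₂ are polynomially convex compact subsets of ℂ such that F₁ ∩ F₂ = {0} and 0 is a boundary point of both F₁ and F₂. If p⁻¹(0) ∩ (K₁ ∪ K₂) is polynomially convex, then K₁ ∪ K₂ is polynomially convex. -/

import Mathlib

open Set Filter Topology

noncomputable section

/-- Evaluation of a multivariate polynomial as a function on `ℂⁿ = Fin n → ℂ`. -/
def mvEval {n : ℕ} (p : MvPolynomial (Fin n) ℂ) : (Fin n → ℂ) → ℂ :=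
  fun z => MvPolynomial.eval z p

/-- The polynomially convex hull of a set in `ℂⁿ`. -/
def polyHull {n : ℕ} (K : Set (Fin n → ℂ)) : Set (Fin n → ℂ) :=
  {z | ∀ p : MvPolynomial (Fin n) ℂ, ‖mvEval p z‖ ≤ sSup ((fun w => ‖mvEval p w‖) '' K)}

/-- A set in `ℂⁿ` is polynomially convex if it equals its polynomially convex hull. -/
def IsPolyConvex {n : ℕ} (K : Set (Fin n → ℂ)) : Prop := polyHull K = K

/-- The polynomially convex hull of a subset of `ℂ`. -/
def polyHull1 (F : Set ℂ) : Set ℂ :=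
  {z | ∀ p : Polynomial ℂ, ‖p.eval z‖ ≤ sSup ((fun w => ‖p.eval w‖) '' F)}

/-- A subset of `ℂ` is polynomially convex if it equals its polynomially convex hull. -/
def IsPolyConvex1 (F : Set ℂ) : Prop := polyHull1 F = F

/-- Partial derivative in the `i`-th coordinate direction. -/
def pd {n : ℕ} (i : Fin n) (f : (Fin n → ℂ) → ℂ) : (Fin n → ℂ) → ℂ :=
  fun z => fderiv ℂ f z (Pi.single i 1)

/-- Iterated partial derivative `D^ℓ = ∂^{ℓ₁+⋯+ℓₙ}/∂z₁^{ℓ₁}⋯∂zₙ^{ℓₙ}`. -/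
def Dml {n : ℕ} (ℓ : Fin n → ℕ) (f : (Fin n → ℂ) → ℂ) : (Fin n → ℂ) → ℂ :=
  (List.finRange n).foldr (fun i g => (pd i)^[ℓ i] g) f

/-- Partial sums `S_λ` of a Taylor-type series around `ζ`, with coefficients computed from a
given family `g` of (extended) partial derivatives: the coefficient of the monomial
`(z-ζ)^{N_j}` is `g (N_j) ζ / (N_{j,1}! ⋯ N_{j,n}!)`. -/
def pSumExt {n : ℕ} (Nj : ℕ → Fin n → ℕ) (g : (Fin n → ℕ) → (Fin n → ℂ) → ℂ)
    (ζ : Fin n → ℂ) (lam : ℕ) : (Fin n → ℂ) → ℂ :=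
  fun z => ∑ j ∈ Finset.range (lam + 1),
    (((∏ i, Nat.factorial (Nj j i) : ℕ) : ℂ))⁻¹ * g (Nj j) ζ * ∏ i, (z i - ζ i) ^ (Nj j i)

/-- Partial sums `S_λ(f,ζ)` of the Taylor development of `f` around `ζ`. -/
def pSum {n : ℕ} (Nj : ℕ → Fin n → ℕ) (f : (Fin n → ℂ) → ℂ)
    (ζ : Fin n → ℂ) (lam : ℕ) : (Fin n → ℂ) → ℂ :=
  pSumExt Nj (fun ℓ => Dml ℓ f) ζ lam

/-- The space `O(Ω)` of holomorphic functions on `Ω`. -/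
def Ospace (n : ℕ) (Ω : Set (Fin n → ℂ)) : Type :=
  {f : (Fin n → ℂ) → ℂ // DifferentiableOn ℂ f Ω}

/-- Topology of uniform convergence on compact subsets of `Ω` on `O(Ω)` (the compact-open
topology induced via restriction to `Ω`). -/
instance (n : ℕ) (Ω : Set (Fin n → ℂ)) : TopologicalSpace (Ospace n Ω) :=
  TopologicalSpace.induced
    (fun f : Ospace n Ω =>
      (⟨Ω.restrict f.1, continuousOn_iff_continuous_restrict.mp f.2.continuousOn⟩ : C(Ω, ℂ)))
    inferInstance

/-- Membership in `A^∞(Ω)`: `f` is holomorphic on `Ω` and each partial derivative `D^ℓ f`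
extends continuously to the closure of `Ω`. -/
def AinfMem (n : ℕ) (Ω : Set (Fin n → ℂ)) (f : (Fin n → ℂ) → ℂ) : Prop :=
  DifferentiableOn ℂ f Ω ∧
    ∀ ℓ : Fin n → ℕ, ∃ g : (Fin n → ℂ) → ℂ,
      ContinuousOn g (closure Ω) ∧ Set.EqOn g (Dml ℓ f) Ω

/-- The space `A^∞(Ω)`. -/
def AinfSpace (n : ℕ) (Ω : Set (Fin n → ℂ)) : Type :=
  {f : (Fin n → ℂ) → ℂ // AinfMem n Ω f}

/-- The chosen continuous extension of `D^ℓ f` to the closure of `Ω`, for `f ∈ A^∞(Ω)`.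
(Its restriction to the closure of `Ω` is uniquely determined.) -/
def AinfExt {n : ℕ} {Ω : Set (Fin n → ℂ)} (f : AinfSpace n Ω) (ℓ : Fin n → ℕ) :
    (Fin n → ℂ) → ℂ :=
  Classical.choose (f.2.2 ℓ)

lemma AinfExt_continuousOn {n : ℕ} {Ω : Set (Fin n → ℂ)} (f : AinfSpace n Ω) (ℓ : Fin n → ℕ) :
    ContinuousOn (AinfExt f ℓ) (closure Ω) :=
  (Classical.choose_spec (f.2.2 ℓ)).1

lemma AinfExt_eqOn {n : ℕ} {Ω : Set (Fin n → ℂ)} (f : AinfSpace n Ω) (ℓ : Fin n → ℕ) :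
    Set.EqOn (AinfExt f ℓ) (Dml ℓ f.1) Ω :=
  (Classical.choose_spec (f.2.2 ℓ)).2

/-- Topology on `A^∞(Ω)`: uniform convergence of every partial derivative on every compact
subset of the closure of `Ω`. -/
instance (n : ℕ) (Ω : Set (Fin n → ℂ)) : TopologicalSpace (AinfSpace n Ω) :=
  TopologicalSpace.induced
    (fun f : AinfSpace n Ω => fun ℓ : Fin n → ℕ =>
      (⟨(closure Ω).restrict (AinfExt f ℓ),
        continuousOn_iff_continuous_restrict.mp (AinfExt_continuousOn f ℓ)⟩ :
          C(closure Ω, ℂ)))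
    inferInstance

/-- A smooth compact curve in `ℂⁿ`: the image of an injective `C^∞` map with
nowhere-vanishing derivative, defined on a compact interval (an arc) or on the
circle (a closed curve, modelled by a 1-periodic map). -/
def IsSmoothCompactCurve {n : ℕ} (K : Set (Fin n → ℂ)) : Prop :=
  ∃ γ : ℝ → (Fin n → ℂ), ContDiff ℝ (⊤ : ℕ∞) γ ∧ (∀ t, deriv γ t ≠ 0) ∧ K = γ '' Set.Icc 0 1 ∧
    (Set.InjOn γ (Set.Icc 0 1) ∨ (Function.Periodic γ 1 ∧ Set.InjOn γ (Set.Ico 0 1)))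

/-- A disjoint union of finitely many smooth compact curves. -/
def IsFiniteUnionOfSmoothCurves {n : ℕ} (K : Set (Fin n → ℂ)) : Prop :=
  ∃ (m : ℕ) (C : Fin m → Set (Fin n → ℂ)),
    (∀ i, IsSmoothCompactCurve (C i)) ∧ Pairwise (Function.onFun Disjoint C) ∧ K = ⋃ i, C i

/-!
Let `x` be in the hull of `K₁ ∪ K₂`. By Janiszewski's theorem `F₁ ∪ F₂` is polynomially convex, so
`p x ∈ F₁ ∪ F₂`. To place `x` in a smaller hull it suffices to find polynomials `q` such that
`q ∘ p` is bounded on `K₁ ∪ K₂`, bounded below at `x`, and arbitrarily small away from the smaller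
set: testing the hull of `K₁ ∪ K₂` on `(q ∘ p) r ^ m` and letting `m → ∞` removes the constants.

* If `p x = 0`, take for `q` peaking polynomials of `F₁ ∪ F₂` at its frontier point `0`. They
  approximate `(z - b) (e - 1)²`, where `e² = (z - a) / (z - b)` for a nearby point `a` outside
  `F₁ ∪ F₂` and a point `b` that can be joined to `a` outside `F₁ ∪ F₂`, so that `e` exists.
* If `p x ∈ F₁` and `p x ≠ 0`, take for `q` polynomials that approximate `z` on `F₁` and `0` on
  `F₂`. If there were none, a continuous linear map `(L₁, L₂)` on `C(F₁) × C(F₂)` would kill all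
  polynomials but not `(z, 0)`. The transforms `L₁ (1 / (ζ - z))` and `- L₂ (1 / (ζ - z))` then
  agree off `F₁ ∪ F₂` and patch to a function `f` holomorphic off `0` whose moment `∮ ζ f(ζ) dζ`
  is a multiple of `L₁ z`. Averaging over small radii and using the local integrability of
  `1 / |ζ - z|` shows that the moment vanishes.
-/

section BanachAlgebra

variable {A : Type*} [NormedCommRing A] [NormedAlgebra ℂ A] [CompleteSpace A]

lemma map_exp_nhds_zero : map NormedSpace.exp (𝓝 (0 : A)) = 𝓝 1 := by
  let _ := NormedAlgebra.restrictScalars ℚ ℂ A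
  have h := (hasStrictFDerivAt_exp_zero (𝕂 := ℂ) (𝔸 := A)).map_nhds_eq_of_surj
    (LinearMap.range_eq_top.2 Function.surjective_id)
  rwa [NormedSpace.exp_zero] at h

lemma algHom_exp (χ : A →ₐ[ℂ] ℂ) (g : A) : χ (NormedSpace.exp g) = Complex.exp (χ g) := by
  let _ := NormedAlgebra.restrictScalars ℚ ℂ A
  rw [Complex.exp_eq_exp_ℂ]
  exact NormedSpace.map_exp χ χ.toContinuousLinearMap.continuous g

lemma eventually_exists_exp_mul_eq {u : A} (hu : IsUnit u) :
    ∀ᶠ v in 𝓝 u, ∃ g, NormedSpace.exp g * u = v ∧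
      ∀ χ : A →ₐ[ℂ] ℂ, χ g = Complex.log (χ v / χ u) := by
  obtain ⟨u, rfl⟩ := hu
  have hsmall : ∀ᶠ g in 𝓝 (0 : A), ‖g‖ * ‖(1 : A)‖ < Real.pi :=
    ((continuous_norm.mul continuous_const).tendsto' 0 0 (by simp)).eventually_lt_const Real.pi_pos
  have hdiv : Tendsto (fun v : A ↦ v * ↑u⁻¹) (𝓝 u) (map NormedSpace.exp (𝓝 0)) :=
    map_exp_nhds_zero (A := A) ▸ (continuous_mul_const _).tendsto' _ _ u.mul_inv
  filter_upwards [hdiv (image_mem_map hsmall)] with v ⟨g, hg, hgv⟩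
  have hv : NormedSpace.exp g * u = v := by rw [hgv, Units.inv_mul_cancel_right]
  refine ⟨g, hv, fun χ ↦ ?_⟩
  have him := abs_lt.1 ((Complex.abs_im_le_norm (χ g)).trans_lt
    ((AlgHom.norm_apply_le_self_mul_norm_one χ g).trans_lt hg))
  rw [← hv, map_mul, mul_div_cancel_right₀ _ (u.isUnit.map χ).ne_zero, algHom_exp,
    Complex.log_exp him.1 him.2.le]

lemma abs_arg_lt_pi_div_two {z : ℂ} (hz : 0 < z.re) : |z.arg| < Real.pi / 2 :=
  Complex.abs_arg_lt_pi_div_two_iff.2 (.inl hz)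

lemma log_div_add_log_div {x y z : ℂ} (hxy : 0 < (x / y).re) (hyz : 0 < (y / z).re) :
    Complex.log (x / y) + Complex.log (y / z) = Complex.log (x / z) := by
  have hne {w : ℂ} (hw : 0 < w.re) : w ≠ 0 := by rintro rfl; exact hw.false
  have h₁ := abs_lt.1 (abs_arg_lt_pi_div_two hxy)
  have h₂ := abs_lt.1 (abs_arg_lt_pi_div_two hyz)
  rw [← (Complex.log_mul_eq_add_log_iff (hne hxy) (hne hyz)).2 ⟨by linarith, by linarith⟩,
    div_mul_div_cancel₀ (div_ne_zero_iff.1 (hne hxy)).2]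

theorem exists_exp_mul_eq_of_isPreconnected {S : Set A} (hS : IsPreconnected S)
    (hunit : ∀ u ∈ S, IsUnit u) {u v : A} (hu : u ∈ S) (hv : v ∈ S) :
    ∃ g, NormedSpace.exp g * u = v ∧ ∀ χ : A →ₐ[ℂ] ℂ,
      (∀ x ∈ S, ∀ y ∈ S, 0 < (χ x / χ y).re) → χ g = Complex.log (χ v / χ u) := by
  let _ := NormedAlgebra.restrictScalars ℚ ℂ A
  refine hS.induction₂ (fun u v ↦ ∃ g, NormedSpace.exp g * u = v ∧ ∀ χ : A →ₐ[ℂ] ℂ,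
      (∀ x ∈ S, ∀ y ∈ S, 0 < (χ x / χ y).re) → χ g = Complex.log (χ v / χ u)) ?_ ?_ ?_ hu hv
  · intro u hu
    filter_upwards [nhdsWithin_le_nhds (eventually_exists_exp_mul_eq (hunit u hu))]
      with v ⟨g, hg, hχ⟩ using ⟨g, hg, fun χ _ ↦ hχ χ⟩
  · rintro x y z hx hy hz ⟨g, rfl, hgχ⟩ ⟨h, rfl, hhχ⟩
    refine ⟨h + g, by rw [NormedSpace.exp_add, mul_assoc], fun χ hχ ↦ ?_⟩
    rw [map_add, hgχ χ hχ, hhχ χ hχ, log_div_add_log_div (hχ _ hz _ hy) (hχ _ hy _ hx)]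
  · rintro x y hx hy ⟨g, rfl, hgχ⟩
    refine ⟨-g, ?_, fun χ hχ ↦ ?_⟩
    · rw [← mul_assoc, ← NormedSpace.exp_add, neg_add_cancel, NormedSpace.exp_zero, one_mul]
    · have harg := abs_lt.1 (abs_arg_lt_pi_div_two (hχ _ hy _ hx))
      rw [map_neg, hgχ χ hχ, ← Complex.log_inv _ (by linarith [Real.pi_pos]), inv_div]

end BanachAlgebra

section ContinuousLogarithm

variable {X : Type*} [TopologicalSpace X]

/-- The function `u` has a continuous logarithm on the set `s`. -/
def HasContinuousLogOn (u : X → ℂ) (s : Set X) : Prop :=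
  ∃ g : X → ℂ, ContinuousOn g s ∧ ∀ x ∈ s, Complex.exp (g x) = u x

namespace HasContinuousLogOn

lemma exp {g : X → ℂ} {s : Set X} (hg : ContinuousOn g s) :
    HasContinuousLogOn (fun x ↦ Complex.exp (g x)) s :=
  ⟨g, hg, fun _ _ ↦ rfl⟩

lemma const {c : ℂ} (hc : c ≠ 0) (s : Set X) : HasContinuousLogOn (fun _ ↦ c) s :=
  ⟨fun _ ↦ Complex.log c, continuousOn_const, fun _ _ ↦ Complex.exp_log hc⟩

variable {u v : X → ℂ} {s t : Set X}

lemma congr (h : HasContinuousLogOn u s) (huv : EqOn u v s) : HasContinuousLogOn v s :=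
  let ⟨g, hg, hexp⟩ := h
  ⟨g, hg, fun x hx ↦ (hexp x hx).trans (huv hx)⟩

lemma mono (h : HasContinuousLogOn u t) (hst : s ⊆ t) : HasContinuousLogOn u s :=
  let ⟨g, hg, hexp⟩ := h
  ⟨g, hg.mono hst, fun x hx ↦ hexp x (hst hx)⟩

lemma mul (hu : HasContinuousLogOn u s) (hv : HasContinuousLogOn v s) :
    HasContinuousLogOn (u * v) s := by
  obtain ⟨f, hf, hfu⟩ := hu
  obtain ⟨g, hg, hgv⟩ := hv
  refine ⟨f + g, hf.add hg, fun x hx ↦ ?_⟩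
  rw [Pi.add_apply, Complex.exp_add, hfu x hx, hgv x hx, Pi.mul_apply]

lemma slitPlane {u : X → ℂ} {s : Set X} (hu : ContinuousOn u s)
    (hus : MapsTo u s Complex.slitPlane) : HasContinuousLogOn u s :=
  ⟨fun x ↦ Complex.log (u x), hu.clog hus,
    fun _ hx ↦ Complex.exp_log (Complex.slitPlane_ne_zero (hus hx))⟩

end HasContinuousLogOn

lemma sub_eq_sub_of_exp_comp_eq {s : Set X} (hs : IsPreconnected s) {f g : X → ℂ}
    (hf : ContinuousOn f s) (hg : ContinuousOn g s)
    (hfg : ∀ x ∈ s, Complex.exp (f x) = Complex.exp (g x)) {x y : X} (hx : x ∈ s) (hy : y ∈ s) :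
    f x - g x = f y - g y := by
  have hone : ∀ x ∈ s, Complex.exp (f x - g x) = 1 := fun x hx ↦ by
    rw [Complex.exp_sub, hfg x hx, div_self (Complex.exp_ne_zero _)]
  exact Complex.isCoveringMap_exp.constOn_of_comp hs (hf.sub hg)
    (fun x hx y hy ↦ Subtype.ext ((hone x hx).trans (hone y hy).symm)) hx hy

theorem HasContinuousLogOn.union {u : X → ℂ} {s t : Set X} (hs : HasContinuousLogOn u s)
    (ht : HasContinuousLogOn u t) (hsc : IsClosed s) (htc : IsClosed t)
    (hst : IsPreconnected (s ∩ t)) : HasContinuousLogOn u (s ∪ t) := by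
  classical
  obtain ⟨f, hf, hfu⟩ := hs
  obtain ⟨g, hg, hgu⟩ := ht
  obtain ⟨c, hc, hfg⟩ : ∃ c, Complex.exp c = 1 ∧ ∀ x ∈ s ∩ t, f x = g x + c := by
    have hexp : ∀ x ∈ s ∩ t, Complex.exp (f x) = Complex.exp (g x) := fun x hx ↦
      (hfu x hx.1).trans (hgu x hx.2).symm
    rcases (s ∩ t).eq_empty_or_nonempty with hempty | ⟨y, hy⟩
    · exact ⟨0, Complex.exp_zero, by simp [hempty]⟩
    · refine ⟨f y - g y, ?_, fun x hx ↦ ?_⟩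
      · rw [Complex.exp_sub, hexp y hy, div_self (Complex.exp_ne_zero _)]
      · rw [← sub_eq_sub_of_exp_comp_eq hst (hf.mono inter_subset_left)
          (hg.mono inter_subset_right) hexp hx hy, add_sub_cancel]
  have hleft : EqOn (s.piecewise f (g · + c)) f s := s.piecewise_eqOn _ _
  have hright : EqOn (s.piecewise f (g · + c)) (g · + c) t := fun x hx ↦ by
    by_cases hxs : x ∈ s
    · rw [hleft hxs, hfg x ⟨hxs, hx⟩]
    · exact s.piecewise_eq_of_notMem _ _ hxs
  refine ⟨s.piecewise f (g · + c), (hf.congr hleft).union_of_isClosed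
    ((hg.add continuousOn_const).congr hright) hsc htc, ?_⟩
  rintro x (hx | hx)
  · rw [hleft hx, hfu x hx]
  · rw [hright hx, Complex.exp_add, hc, mul_one, hgu x hx]

theorem HasContinuousLogOn.homotopy {Y : Type*} [TopologicalSpace Y] {T : Set Y}
    (hT : IsPreconnected T) {s : Set X} (hs : IsCompact s) {Φ : Y → X → ℂ}
    (hΦ : ContinuousOn (fun q : Y × X ↦ Φ q.1 q.2) (T ×ˢ s)) (hne : ∀ y ∈ T, ∀ x ∈ s, Φ y x ≠ 0)
    {y z : Y} (hy : y ∈ T) (hz : z ∈ T) (hlog : HasContinuousLogOn (Φ y) s) :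
    HasContinuousLogOn (Φ z) s := by
  have := isCompact_iff_compactSpace.1 hs
  have := isPreconnected_iff_preconnectedSpace.1 hT
  let Ψ : C(T × s, ℂ) := ⟨fun q ↦ Φ q.1 q.2, hΦ.comp_continuous
    (f := fun q : T × s ↦ ((q.1 : Y), (q.2 : X))) (by fun_prop) fun q ↦ ⟨q.1.2, q.2.2⟩⟩
  obtain ⟨g, hg, -⟩ := exists_exp_mul_eq_of_isPreconnected (S := range Ψ.curry)
    (isPreconnected_range Ψ.curry.continuous)
    (by rintro _ ⟨t, rfl⟩
        exact ContinuousMap.isUnit_iff_forall_ne_zero _ |>.2 fun x ↦ hne t t.2 x x.2)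
    (mem_range_self ⟨y, hy⟩) (mem_range_self ⟨z, hz⟩)
  have hgx (x : s) : Complex.exp (g x) * Φ y x = Φ z x := by
    have := congrArg (ContinuousMap.evalAlgHom ℂ ℂ x) hg
    rwa [map_mul, algHom_exp] at this
  have hext (x : s) : Function.extend Subtype.val g 0 (x : X) = g x :=
    Subtype.val_injective.extend_apply g 0 x
  have hcont : ContinuousOn (Function.extend Subtype.val g 0) s :=
    continuousOn_iff_continuous_domRestrict.2 (g.continuous.congr fun x ↦ (hext x).symm)
  refine ((HasContinuousLogOn.exp hcont).mul hlog).congr fun x hx ↦ ?_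
  rw [Pi.mul_apply, hext ⟨x, hx⟩, hgx ⟨x, hx⟩]

theorem not_hasContinuousLogOn_id_sphere : ¬ HasContinuousLogOn id (Metric.sphere (0 : ℂ) 1) := by
  rintro ⟨g, hg, hexp⟩
  have hmem (t : ℝ) : Complex.exp (t * Complex.I) ∈ Metric.sphere (0 : ℂ) 1 := by
    rw [mem_sphere_zero_iff_norm, Complex.norm_exp_ofReal_mul_I]
  have h := sub_eq_sub_of_exp_comp_eq (x := 2 * Real.pi) (y := 0)
    isPreconnected_univ (hg.comp_continuous (by fun_prop) hmem).continuousOn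
    (by fun_prop : ContinuousOn (fun t : ℝ ↦ t * Complex.I) univ)
    (fun t _ ↦ hexp _ (hmem t)) (mem_univ _) (mem_univ _)
  simp [Complex.exp_two_pi_mul_I] at h

lemma HasContinuousLogOn.exists_continuous_extension {s : Set ℂ} (hs : IsClosed s) {u : ℂ → ℂ}
    (h : HasContinuousLogOn u s) :
    ∃ G : ℂ → ℂ, Continuous G ∧ ∀ z ∈ s, Complex.exp (G z) = u z := by
  obtain ⟨g, hg, hexp⟩ := h
  obtain ⟨G, hG⟩ := ContinuousMap.exists_restrict_eq hs
    ⟨s.domRestrict g, continuousOn_iff_continuous_domRestrict.1 hg⟩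
  refine ⟨G, G.continuous, fun z hz ↦ ?_⟩
  rw [← hexp z hz]
  exact congrArg Complex.exp (DFunLike.congr_fun hG ⟨z, hz⟩)

lemma hasContinuousLogOn_circle {h : ℂ → ℂ} (hh : Continuous h) {z₀ : ℂ}
    (hne : ∀ z ≠ z₀, h z ≠ 0) {R : ℝ} (hR : ∀ z ∉ Metric.ball z₀ R, h z = 1) {r : ℝ}
    (hr : 0 < r) : HasContinuousLogOn (fun w ↦ h (z₀ + r * w)) (Metric.sphere 0 1) := by
  refine HasContinuousLogOn.homotopy (T := Ioi (0 : ℝ)) (y := max R 1) isPreconnected_Ioi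
    (isCompact_sphere 0 1) (Φ := fun t w ↦ h (z₀ + t * w)) (by fun_prop) (fun t ht w hw ↦ ?_)
    (mem_Ioi.2 (by positivity)) hr ?_
  · refine hne _ (by simp [(mem_Ioi.1 ht).ne', ne_zero_of_mem_unit_sphere ⟨w, hw⟩])
  · refine (HasContinuousLogOn.const one_ne_zero _).congr fun w hw ↦ (hR _ ?_).symm
    have hw1 : ‖w‖ = 1 := mem_sphere_zero_iff_norm.1 hw
    simp only [Metric.mem_ball, dist_eq_norm, add_sub_cancel_left, norm_mul, hw1, mul_one,
      Complex.norm_real, not_lt]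
    exact (le_max_left R 1).trans (le_abs_self _)

/-- A continuous logarithm of `z - z₀` on the boundary would deform a small circle around `z₀` to
one outside `U`, where `(z - z₀) / exp` can be continued by the constant `1`. -/
theorem not_hasContinuousLogOn_sub_frontier {U : Set ℂ} (hU : IsOpen U)
    (hbdd : Bornology.IsBounded U) {z₀ : ℂ} (hz₀ : z₀ ∈ U) :
    ¬ HasContinuousLogOn (fun z ↦ z - z₀) (frontier U) := by
  classical
  intro hlog
  obtain ⟨G, hG, hexp⟩ := hlog.exists_continuous_extension isClosed_frontier
  let h : ℂ → ℂ := U.piecewise (fun z ↦ (z - z₀) * Complex.exp (-G z)) 1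
  have hin : ∀ z ∈ U, h z = (z - z₀) * Complex.exp (-G z) := fun z hz ↦ U.piecewise_eq_of_mem _ _ hz
  have hout : ∀ z ∉ U, h z = 1 := fun z hz ↦ U.piecewise_eq_of_notMem _ _ hz
  have hcont : Continuous h := by
    refine continuous_piecewise (fun z hz ↦ ?_) (by fun_prop) continuousOn_const
    rw [← hexp z hz, ← Complex.exp_add, add_neg_cancel, Complex.exp_zero, Pi.one_apply]
  have hne : ∀ z ≠ z₀, h z ≠ 0 := fun z hz ↦ by
    by_cases hzU : z ∈ U
    · rw [hin z hzU]
      exact mul_ne_zero (sub_ne_zero.2 hz) (Complex.exp_ne_zero _)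
    · rw [hout z hzU]
      exact one_ne_zero
  obtain ⟨R, hR⟩ := hbdd.subset_ball z₀
  obtain ⟨r, hr, hrU⟩ := Metric.nhds_basis_closedBall.mem_iff.1 (hU.mem_nhds hz₀)
  have hmem : ∀ w ∈ Metric.sphere (0 : ℂ) 1, z₀ + r * w ∈ U := fun w hw ↦ hrU <| by
    simp [mem_sphere_zero_iff_norm.1 hw, abs_of_pos hr]
  have hcircle := hasContinuousLogOn_circle hcont hne (fun z hz ↦ hout z fun hzU ↦ hz (hR hzU)) hr
  have hunit := HasContinuousLogOn.exp (s := Metric.sphere (0 : ℂ) 1)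
    (g := fun w ↦ G (z₀ + r * w)) (by fun_prop)
  have hr₀ : (r : ℂ) ≠ 0 := Complex.ofReal_ne_zero.2 hr.ne'
  have hscale := HasContinuousLogOn.const (inv_ne_zero hr₀) (Metric.sphere (0 : ℂ) 1)
  refine not_hasContinuousLogOn_id_sphere (((hcircle.mul hunit).mul hscale).congr fun w hw ↦ ?_)
  rw [Pi.mul_apply, Pi.mul_apply, hin _ (hmem w hw), add_sub_cancel_left, mul_assoc (r * w),
    ← Complex.exp_add, neg_add_cancel, Complex.exp_zero, mul_one, mul_right_comm,
    mul_inv_cancel₀ hr₀, one_mul, id]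

end ContinuousLogarithm

section Topology

lemma frontier_connectedComponentIn_subset {X : Type*} [TopologicalSpace X]
    [LocallyConnectedSpace X] {U : Set X} (hU : IsOpen U) (x : X) :
    frontier (connectedComponentIn U x) ⊆ Uᶜ := by
  intro y hy hyU
  have hopen := hU.connectedComponentIn (x := x)
  obtain ⟨w, hwy, hwx⟩ := mem_closure_iff.1 hy.1 _ hU.connectedComponentIn
    (mem_connectedComponentIn hyU)
  have heq : connectedComponentIn U x = connectedComponentIn U y :=
    (connectedComponentIn_eq hwx).trans (connectedComponentIn_eq hwy).symm
  exact hy.2 (hopen.interior_eq.symm ▸ heq ▸ mem_connectedComponentIn hyU)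

end Topology

section UniformAlgebra

/-- The uniform algebra `P(F)` of all uniform limits of polynomials on the compact plane set `F`. -/
abbrev polynomialUniformAlgebra (F : Set ℂ) [CompactSpace F] : Subalgebra ℂ C(F, ℂ) :=
  (polynomialFunctions F).topologicalClosure

namespace polynomialUniformAlgebra

/-- The coordinate function, as an element of `P(F)`. -/
def coord (F : Set ℂ) [CompactSpace F] : polynomialUniformAlgebra F :=
  ⟨Polynomial.toContinuousMapOnAlgHom F Polynomial.X,
    Subalgebra.le_topologicalClosure _ ⟨_, trivial, rfl⟩⟩

/-- Evaluation at a point of `F`, as a character of `P(F)`. -/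
def eval {F : Set ℂ} [CompactSpace F] (ζ : F) : polynomialUniformAlgebra F →ₐ[ℂ] ℂ :=
  (ContinuousMap.evalAlgHom ℂ ℂ ζ).comp (Subalgebra.val _)

variable {F : Set ℂ} [CompactSpace F]

instance : CompleteSpace (polynomialUniformAlgebra F) :=
  (Subalgebra.isClosed_topologicalClosure _).completeSpace_coe

@[simp] lemma eval_coord (ζ : F) : eval ζ (coord F) = ζ := by
  simp [eval, coord]

lemma norm_le_iff {f : polynomialUniformAlgebra F} {C : ℝ} (hC : 0 ≤ C) :
    ‖f‖ ≤ C ↔ ∀ ζ : F, ‖eval ζ f‖ ≤ C :=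
  ContinuousMap.norm_le _ hC

lemma eval_aeval_coord (ζ : F) (q : Polynomial ℂ) :
    eval ζ (Polynomial.aeval (coord F) q) = q.eval (ζ : ℂ) := by
  rw [← Polynomial.aeval_algHom_apply, eval_coord, Polynomial.coe_aeval_eq_eval]

lemma exists_polynomial_norm_eval_sub_lt (f : polynomialUniformAlgebra F) {ε : ℝ} (hε : 0 < ε) :
    ∃ q : Polynomial ℂ, ∀ ζ : F, ‖eval ζ f - q.eval (ζ : ℂ)‖ < ε := by
  obtain ⟨_, ⟨q, -, rfl⟩, hq⟩ := Metric.mem_closure_iff.1 f.2 ε hε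
  exact ⟨q, fun ζ ↦ (dist_eq_norm _ _).symm.trans_lt
    ((ContinuousMap.dist_apply_le_dist ζ).trans_lt hq)⟩

end polynomialUniformAlgebra

open polynomialUniformAlgebra

variable {F : Set ℂ}

lemma norm_eval_le_of_mem_polyHull1 {z : ℂ} (hz : z ∈ polyHull1 F) {q : Polynomial ℂ} {C : ℝ}
    (hC : 0 ≤ C) (hq : ∀ ζ ∈ F, ‖q.eval ζ‖ ≤ C) : ‖q.eval z‖ ≤ C :=
  (hz q).trans (Real.sSup_le (forall_mem_image.2 hq) hC)

lemma norm_eval_le_sSup (hF : IsCompact F) (q : Polynomial ℂ) {ζ : ℂ} (hζ : ζ ∈ F) :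
    ‖q.eval ζ‖ ≤ sSup ((fun w ↦ ‖q.eval w‖) '' F) :=
  le_csSup (hF.image q.continuous.norm).bddAbove (mem_image_of_mem _ hζ)

lemma spectrum_coord_subset [CompactSpace F] : spectrum ℂ (coord F) ⊆ polyHull1 F := by
  intro z hz q
  have hone : ‖(1 : polynomialUniformAlgebra F)‖ ≤ 1 :=
    (norm_le_iff zero_le_one).2 fun ζ ↦ by rw [map_one, norm_one]
  calc ‖q.eval z‖
      ≤ ‖Polynomial.aeval (coord F) q‖ * ‖(1 : polynomialUniformAlgebra F)‖ :=
        spectrum.norm_le_norm_mul_of_mem (spectrum.subset_polynomial_aeval _ q ⟨z, hz, rfl⟩)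
    _ ≤ ‖Polynomial.aeval (coord F) q‖ := mul_le_of_le_one_right (norm_nonneg _) hone
    _ ≤ sSup ((fun w ↦ ‖q.eval w‖) '' F) := by
        refine (norm_le_iff (Real.sSup_nonneg (forall_mem_image.2 fun _ _ ↦ norm_nonneg _))).2
          fun ζ ↦ ?_
        rw [eval_aeval_coord]
        exact norm_eval_le_sSup (isCompact_iff_compactSpace.2 ‹_›) q ζ.2

/-- If `f` inverts `z - ζ` in `P(F)` and `q` approximates `f`, then `1 - (z - ζ) q` is small
on `F` but equal to `1` at `z`. -/
lemma polyHull1_subset_spectrum_coord [CompactSpace F] : polyHull1 F ⊆ spectrum ℂ (coord F) := by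
  intro z hz hunit
  obtain ⟨f, hf⟩ := hunit.exists_right_inv
  set a := algebraMap ℂ (polynomialUniformAlgebra F) z - coord F with ha
  have heval (ζ : F) : eval ζ a = z - ζ := by
    rw [ha, map_sub, AlgHom.commutes, eval_coord, Algebra.algebraMap_self_apply]
  obtain ⟨q, hq⟩ := exists_polynomial_norm_eval_sub_lt f
    (ε := 1 / (2 * (‖a‖ + 1))) (by positivity)
  have hsmall : ∀ ζ ∈ F, ‖(1 - (Polynomial.C z - Polynomial.X) * q).eval ζ‖ ≤ 1 / 2 := by
    intro ζ hζ
    have hinv : (z - ζ) * eval ⟨ζ, hζ⟩ f = 1 := by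
      rw [← heval ⟨ζ, hζ⟩, ← map_mul, hf, map_one]
    calc ‖(1 - (Polynomial.C z - Polynomial.X) * q).eval ζ‖
        = ‖(z - ζ) * (eval ⟨ζ, hζ⟩ f - q.eval ζ)‖ := by rw [mul_sub, hinv]; simp
      _ = ‖eval ⟨ζ, hζ⟩ a‖ * ‖eval ⟨ζ, hζ⟩ f - q.eval ζ‖ := by rw [norm_mul, heval]
      _ ≤ (‖a‖ + 1) * (1 / (2 * (‖a‖ + 1))) := mul_le_mul
          (((norm_le_iff (norm_nonneg a)).1 le_rfl _).trans (lt_add_one _).le) (hq _).le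
          (norm_nonneg _) (by positivity)
      _ = 1 / 2 := by field_simp
  have hz_le := norm_eval_le_of_mem_polyHull1 hz (by norm_num) hsmall
  norm_num at hz_le

theorem spectrum_coord [CompactSpace F] : spectrum ℂ (coord F) = polyHull1 F :=
  Subset.antisymm spectrum_coord_subset polyHull1_subset_spectrum_coord

lemma subset_polyHull1 (hF : IsCompact F) : F ⊆ polyHull1 F := fun _ hζ q ↦
  norm_eval_le_sSup hF q hζ

lemma subset_polyHull1_of_frontier_subset (hF : IsCompact F) {U : Set ℂ}
    (hU : Bornology.IsBounded U) (hUF : frontier U ⊆ F) : U ⊆ polyHull1 F := fun _ hz q ↦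
  Complex.norm_le_of_forall_mem_frontier_norm_le hU q.differentiable.diffContOnCl
    (fun _ hζ ↦ norm_eval_le_sSup hF q (hUF hζ)) (subset_closure hz)

lemma isBounded_connectedComponentIn_of_mem_polyHull1 (hF : IsCompact F) {z : ℂ}
    (hz : z ∈ polyHull1 F) : Bornology.IsBounded (connectedComponentIn Fᶜ z) := by
  have := isCompact_iff_compactSpace.1 hF
  have := Subalgebra.isClosed_topologicalClosure (polynomialFunctions F)
  rw [← spectrum_coord] at hz
  have hrange : range ((coord F : polynomialUniformAlgebra F) : C(F, ℂ)) = F := by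
    refine Eq.trans ?_ Subtype.range_val
    exact congrArg range (funext eval_coord)
  have h := Subalgebra.spectrum_isBounded_connectedComponentIn _ _ hz
  rwa [ContinuousMap.spectrum_eq_range, hrange] at h

lemma not_isBounded_connectedComponentIn (hF : IsCompact F) (hpc : IsPolyConvex1 F) {z : ℂ}
    (hz : z ∉ F) : ¬ Bornology.IsBounded (connectedComponentIn Fᶜ z) := fun hbdd ↦ by
  have hsub := frontier_connectedComponentIn_subset hF.isClosed.isOpen_compl z
  rw [compl_compl] at hsub
  exact hz (hpc ▸ subset_polyHull1_of_frontier_subset hF hbdd hsub (mem_connectedComponentIn hz))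

end UniformAlgebra

section Janiszewski

lemma hasContinuousLogOn_sub_of_isPolyConvex1 {F : Set ℂ} (hF : IsCompact F)
    (hpc : IsPolyConvex1 F) {z₀ : ℂ} (hz₀ : z₀ ∉ F) : HasContinuousLogOn (fun z ↦ z - z₀) F := by
  obtain ⟨b, hb, hbF⟩ : ∃ b ∈ connectedComponentIn Fᶜ z₀, ∀ z ∈ F, ‖z‖ < ‖b‖ := by
    obtain ⟨R, hR⟩ := hF.isBounded.exists_norm_le
    by_contra! h
    refine not_isBounded_connectedComponentIn hF hpc hz₀
      (isBounded_iff_forall_norm_le.2 ⟨R, fun b hb ↦ ?_⟩)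
    obtain ⟨z, hz, hbz⟩ := h b hb
    exact hbz.trans (hR z hz)
  refine HasContinuousLogOn.homotopy (Φ := fun y z ↦ z - y) isPreconnected_connectedComponentIn hF
    (by fun_prop) (fun y hy z hz ↦ ?_) hb (mem_connectedComponentIn hz₀) ?_
  · rintro h
    exact connectedComponentIn_subset _ _ hy (sub_eq_zero.1 h ▸ hz)
  · rcases F.eq_empty_or_nonempty with rfl | ⟨ζ, hζ⟩
    · exact ⟨0, by simp, by simp⟩
    have hb₀ : b ≠ 0 := norm_pos_iff.1 ((norm_nonneg ζ).trans_lt (hbF ζ hζ))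
    have hslit : MapsTo (fun z ↦ 1 + -(z / b)) F Complex.slitPlane := fun z hz ↦ by
      refine Complex.mem_slitPlane_of_norm_lt_one ?_
      rw [norm_neg, norm_div, div_lt_one (norm_pos_iff.2 hb₀)]
      exact hbF z hz
    refine ((HasContinuousLogOn.const (neg_ne_zero.2 hb₀) F).mul
      (.slitPlane (by fun_prop) hslit)).congr fun z _ ↦ ?_
    rw [Pi.mul_apply]
    field_simp
    ring

theorem IsPolyConvex1.union {F₁ F₂ : Set ℂ} (hpc₁ : IsPolyConvex1 F₁) (hpc₂ : IsPolyConvex1 F₂)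
    (hF₁ : IsCompact F₁) (hF₂ : IsCompact F₂) (hcap : IsPreconnected (F₁ ∩ F₂)) :
    IsPolyConvex1 (F₁ ∪ F₂) := by
  have hF := hF₁.union hF₂
  refine Subset.antisymm (fun z₀ hz₀ ↦ ?_) (subset_polyHull1 hF)
  by_contra hmem
  obtain ⟨hmem₁, hmem₂⟩ := not_or.1 hmem
  have hfrontier := frontier_connectedComponentIn_subset hF.isClosed.isOpen_compl z₀
  rw [compl_compl] at hfrontier
  exact not_hasContinuousLogOn_sub_frontier hF.isClosed.isOpen_compl.connectedComponentIn
    (isBounded_connectedComponentIn_of_mem_polyHull1 hF hz₀) (mem_connectedComponentIn hmem)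
    (((hasContinuousLogOn_sub_of_isPolyConvex1 hF₁ hpc₁ hmem₁).union
      (hasContinuousLogOn_sub_of_isPolyConvex1 hF₂ hpc₂ hmem₂) hF₁.isClosed hF₂.isClosed hcap).mono
      hfrontier)

end Janiszewski

section PeakFunction

lemma norm_mul_sub_one_sq_le {z w e : ℂ} (h : w * e ^ 2 = z) :
    ‖w * (e - 1) ^ 2‖ ≤ 2 * (‖z‖ + ‖w‖) := by
  have he : ‖e - 1‖ ^ 2 ≤ 2 * (‖e‖ ^ 2 + 1) := by
    have h₁ : ‖e - 1‖ ≤ ‖e‖ + 1 := (norm_sub_le e 1).trans_eq (by rw [norm_one])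
    nlinarith [norm_nonneg (e - 1), sq_nonneg (‖e‖ - 1)]
  rw [← h, norm_mul, norm_mul, norm_pow, norm_pow]
  nlinarith [mul_le_mul_of_nonneg_left he (norm_nonneg w)]

lemma norm_sub_sq_eq_mul {z w e : ℂ} (h : w * e ^ 2 = z) :
    ‖z - w‖ ^ 2 = ‖w * (e - 1) ^ 2‖ * ‖w * (e + 1) ^ 2‖ := by
  rw [← norm_mul, ← norm_pow, ← h]
  ring_nf

lemma norm_sub_sq_le_mul {z w e : ℂ} (h : w * e ^ 2 = z) :
    ‖z - w‖ ^ 2 ≤ ‖w * (e - 1) ^ 2‖ * (2 * (‖z‖ + ‖w‖)) := by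
  have hplus := norm_mul_sub_one_sq_le (z := z) (w := w) (e := -e) (by rwa [neg_sq])
  rw [← neg_add', neg_sq] at hplus
  rw [norm_sub_sq_eq_mul h]
  gcongr

lemma norm_mul_sub_one_sq_mul_le {z w e : ℂ} (h : w * e ^ 2 = z) (he : 0 ≤ e.re) :
    ‖w * (e - 1) ^ 2‖ * ‖w‖ ≤ ‖z - w‖ ^ 2 := by
  have hplus : 1 ≤ ‖e + 1‖ := by
    refine le_trans ?_ (Complex.re_le_norm _)
    rw [Complex.add_re, Complex.one_re]
    linarith
  rw [norm_sub_sq_eq_mul h, norm_mul w (_ ^ 2), norm_mul w ((e + 1) ^ 2), norm_pow (e + 1)]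
  gcongr
  exact le_mul_of_one_le_right (norm_nonneg _) (one_le_pow₀ hplus)

open polynomialUniformAlgebra

variable {F : Set ℂ}

lemma exists_mem_connectedComponentIn_le_dist (hF : IsCompact F) (hpc : IsPolyConvex1 F) {a c : ℂ}
    {s R : ℝ} (ha : a ∉ F) (hac : dist a c < R) (hsR : s < R) :
    ∃ b ∈ connectedComponentIn (Fᶜ ∩ Metric.ball c R) a, s ≤ dist b c := by
  by_contra! h
  set C := connectedComponentIn (Fᶜ ∩ Metric.ball c R) a
  have hCs : C ⊆ Metric.closedBall c s := fun b hb ↦ (h b hb).le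
  have hfrontier : frontier C ⊆ F := fun z hz ↦ by
    have hzR : z ∈ Metric.ball c R := Metric.closedBall_subset_ball hsR
      (closure_minimal hCs Metric.isClosed_closedBall (frontier_subset_closure hz))
    by_contra hzF
    exact frontier_connectedComponentIn_subset
      (hF.isClosed.isOpen_compl.inter Metric.isOpen_ball) a hz ⟨hzF, hzR⟩
  exact ha (hpc ▸ subset_polyHull1_of_frontier_subset hF (Metric.isBounded_closedBall.subset hCs)
    hfrontier (mem_connectedComponentIn ⟨ha, hac⟩))

lemma sub_div_sub_re_pos {ζ x y : ℂ} (h : dist x y < dist ζ y) : 0 < ((ζ - x) / (ζ - y)).re := by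
  have hy : ζ - y ≠ 0 := sub_ne_zero.2 (dist_pos.1 (dist_nonneg.trans_lt h))
  have hlt : ‖(x - y) / (ζ - y)‖ < 1 := by
    rwa [norm_div, div_lt_one (norm_pos_iff.2 hy), ← dist_eq_norm, ← dist_eq_norm]
  have heq : (ζ - x) / (ζ - y) = 1 - (x - y) / (ζ - y) := by
    field_simp
    ring
  rw [heq, Complex.sub_re, Complex.one_re]
  linarith [(Complex.re_le_norm _).trans_lt hlt]

lemma exists_log_coord_sub_div [CompactSpace F] (hpc : IsPolyConvex1 F) {c : ℂ} {R : ℝ} {S : Set ℂ}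
    (hS : IsPreconnected S) (hSF : S ⊆ Fᶜ ∩ Metric.ball c R) {a b : ℂ} (ha : a ∈ S) (hb : b ∈ S) :
    ∃ g : polynomialUniformAlgebra F,
      (∀ ζ : F, (ζ - b) * Complex.exp (eval ζ g) = ζ - a) ∧
      ∀ ζ : F, 3 * R ≤ dist (ζ : ℂ) c → eval ζ g = Complex.log ((ζ - a) / (ζ - b)) := by
  let φ : ℂ → polynomialUniformAlgebra F := fun x ↦ coord F - algebraMap ℂ _ x
  have hφ (ζ : F) (x : ℂ) : eval ζ (φ x) = ζ - x := by
    rw [map_sub, AlgHom.commutes, eval_coord, Algebra.algebraMap_self_apply]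
  have hunit : ∀ u ∈ φ '' S, IsUnit u := by
    rintro _ ⟨x, hx, rfl⟩
    have hx' : x ∉ spectrum ℂ (coord F) := by
      rw [spectrum_coord, hpc]
      exact (hSF hx).1
    rw [show φ x = -(algebraMap ℂ _ x - coord F) from (neg_sub _ _).symm]
    exact (spectrum.notMem_iff.1 hx').neg
  obtain ⟨g, hg, hlog⟩ := exists_exp_mul_eq_of_isPreconnected
    (hS.image φ (continuous_const.sub (algebraMapCLM ℂ _).continuous).continuousOn) hunit
    (mem_image_of_mem φ hb) (mem_image_of_mem φ ha)
  refine ⟨g, fun ζ ↦ ?_, fun ζ hζ ↦ ?_⟩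
  · rw [← hφ, ← hφ, ← hg, map_mul, algHom_exp, mul_comm]
  · rw [← hφ, ← hφ]
    refine hlog (eval ζ) (forall_mem_image.2 fun x hx ↦ forall_mem_image.2 fun y hy ↦ ?_)
    rw [hφ, hφ]
    refine sub_div_sub_re_pos ?_
    have hxc : dist x c < R := (hSF hx).2
    have hyc : dist y c < R := (hSF hy).2
    linarith [dist_triangle_right x y c, dist_triangle (ζ : ℂ) y c]

lemma exp_half_log_re_pos {z : ℂ} (hz : 0 < z.re) : 0 < (Complex.exp (Complex.log z / 2)).re := by
  have harg := abs_lt.1 (abs_arg_lt_pi_div_two hz)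
  have him : (Complex.log z / 2).im = z.arg / 2 := by
    rw [Complex.div_ofNat_im, Complex.log_im]
  rw [Complex.exp_re, him]
  exact mul_pos (Real.exp_pos _)
    (Real.cos_pos_of_mem_Ioo ⟨by linarith [Real.pi_pos], by linarith [Real.pi_pos]⟩)

lemma exists_sqrt_coord_sub_div [CompactSpace F] (hpc : IsPolyConvex1 F) {c : ℂ}
    (hc : c ∈ frontier F) {δ : ℝ} (hδ : 0 < δ) :
    ∃ a b : ℂ, dist a c < δ ∧ dist b c < 3 * δ ∧ δ ≤ dist a b ∧
      ∃ e : polynomialUniformAlgebra F, ∀ ζ : F,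
        (ζ - b) * eval ζ e ^ 2 = ζ - a ∧ (9 * δ ≤ dist (ζ : ℂ) c → 0 ≤ (eval ζ e).re) := by
  have hF := isCompact_iff_compactSpace.2 ‹CompactSpace F›
  obtain ⟨a, haF, hac⟩ : ∃ a ∈ Fᶜ, dist a c < δ := by
    rw [frontier_eq_closure_inter_closure] at hc
    simpa only [dist_comm] using Metric.mem_closure_iff.1 hc.2 δ hδ
  have haR : dist a c < 3 * δ := by linarith
  obtain ⟨b, hbC, hbc⟩ := exists_mem_connectedComponentIn_le_dist (s := 2 * δ) hF hpc
    haF haR (by linarith)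
  have hCsub := connectedComponentIn_subset (Fᶜ ∩ Metric.ball c (3 * δ)) a
  have hbR : dist b c < 3 * δ := (hCsub hbC).2
  obtain ⟨g, hg, hlog⟩ := exists_log_coord_sub_div hpc isPreconnected_connectedComponentIn hCsub
    (mem_connectedComponentIn ⟨haF, haR⟩) hbC
  have hexp (ζ : F) : eval ζ (NormedSpace.exp ((1 / 2 : ℂ) • g)) = Complex.exp (eval ζ g / 2) := by
    rw [algHom_exp, map_smul, smul_eq_mul, one_div, inv_mul_eq_div]
  refine ⟨a, b, hac, hbR, by linarith [dist_triangle_left b c a],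
    NormedSpace.exp ((1 / 2 : ℂ) • g), fun ζ ↦ ⟨?_, fun hζ ↦ ?_⟩⟩
  · rw [hexp, ← hg, ← Complex.exp_nat_mul, Nat.cast_ofNat, mul_div_cancel₀ _ two_ne_zero]
  · rw [hexp, hlog ζ (by linarith)]
    refine (exp_half_log_re_pos (sub_div_sub_re_pos ?_)).le
    linarith [dist_triangle_right a b c, dist_triangle (ζ : ℂ) b c]

lemma le_norm_peak {a b c e : ℂ} {δ : ℝ} (hδ : 0 < δ) (hac : dist a c < δ)
    (hbc : dist b c < 3 * δ) (hab : δ ≤ dist a b) (he : (c - b) * e ^ 2 = c - a) :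
    δ ≤ 8 * ‖(c - b) * (e - 1) ^ 2‖ := by
  rw [dist_comm, dist_eq_norm] at hac hbc
  have hsq : δ ^ 2 ≤ 8 * ‖(c - b) * (e - 1) ^ 2‖ * δ := calc
    δ ^ 2 ≤ dist a b ^ 2 := by gcongr
    _ = ‖(c - a) - (c - b)‖ ^ 2 := by rw [sub_sub_sub_cancel_left, dist_comm, dist_eq_norm]
    _ ≤ ‖(c - b) * (e - 1) ^ 2‖ * (2 * (‖c - a‖ + ‖c - b‖)) := norm_sub_sq_le_mul he
    _ ≤ ‖(c - b) * (e - 1) ^ 2‖ * (8 * δ) := mul_le_mul_of_nonneg_left (by linarith) (norm_nonneg _)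
    _ = 8 * ‖(c - b) * (e - 1) ^ 2‖ * δ := by ring
  exact le_of_mul_le_mul_right (sq δ ▸ hsq) hδ

lemma norm_peak_mul_dist_le {a b c ζ e : ℂ} {δ : ℝ} (hac : dist a c < δ) (hbc : dist b c < 3 * δ)
    (hζ : 9 * δ ≤ dist ζ c) (he : (ζ - b) * e ^ 2 = ζ - a) (hre : 0 ≤ e.re) :
    ‖(ζ - b) * (e - 1) ^ 2‖ * dist ζ c ≤ 24 * δ ^ 2 := by
  have hζb : dist ζ c ≤ 3 / 2 * ‖ζ - b‖ := by
    rw [← dist_eq_norm]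
    linarith [dist_triangle ζ b c]
  calc ‖(ζ - b) * (e - 1) ^ 2‖ * dist ζ c
      ≤ ‖(ζ - b) * (e - 1) ^ 2‖ * (3 / 2 * ‖ζ - b‖) := by gcongr
    _ = 3 / 2 * (‖(ζ - b) * (e - 1) ^ 2‖ * ‖ζ - b‖) := by ring
    _ ≤ 3 / 2 * ‖(ζ - a) - (ζ - b)‖ ^ 2 := by gcongr; exact norm_mul_sub_one_sq_mul_le he hre
    _ = 3 / 2 * dist a b ^ 2 := by rw [sub_sub_sub_cancel_left, dist_comm, dist_eq_norm]
    _ ≤ 3 / 2 * (4 * δ) ^ 2 := by gcongr; linarith [dist_triangle_right a b c]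
    _ = 24 * δ ^ 2 := by ring

lemma norm_peak_le {a b c ζ e : ℂ} {δ : ℝ} (hac : dist a c < δ) (hbc : dist b c < 3 * δ)
    (hζ : dist ζ c ≤ 9 * δ) (he : (ζ - b) * e ^ 2 = ζ - a) :
    ‖(ζ - b) * (e - 1) ^ 2‖ ≤ 44 * δ := by
  have h := norm_mul_sub_one_sq_le he
  rw [← dist_eq_norm ζ a, ← dist_eq_norm ζ b] at h
  linarith [dist_triangle_right ζ a c, dist_triangle_right ζ b c]

/-- With `e² = (ζ - a) / (ζ - b)`, the function `(ζ - b) (e - 1)²` is of the order of `|a - b|` at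
`c`, but decays like `|a - b|² / |ζ - c|`. -/
lemma exists_peak_of_scale [CompactSpace F] (hpc : IsPolyConvex1 F) {c : ℂ} (hc : c ∈ frontier F)
    {δ : ℝ} (hδ : 0 < δ) :
    ∃ f : polynomialUniformAlgebra F, ∀ ζ : F, ((ζ : ℂ) = c → δ ≤ 8 * ‖eval ζ f‖) ∧
      (dist (ζ : ℂ) c ≤ 9 * δ → ‖eval ζ f‖ ≤ 44 * δ) ∧
      (9 * δ ≤ dist (ζ : ℂ) c → ‖eval ζ f‖ * dist (ζ : ℂ) c ≤ 24 * δ ^ 2) := by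
  obtain ⟨a, b, hac, hbc, hab, e, he⟩ := exists_sqrt_coord_sub_div hpc hc hδ
  refine ⟨(coord F - algebraMap ℂ _ b) * (e - 1) ^ 2, fun ζ ↦ ?_⟩
  have heval : eval ζ ((coord F - algebraMap ℂ _ b) * (e - 1) ^ 2) =
      (ζ - b) * (eval ζ e - 1) ^ 2 := by
    simp only [map_mul, map_sub, map_pow, map_one, AlgHom.commutes, eval_coord,
      Algebra.algebraMap_self_apply]
  obtain ⟨hsq, hre⟩ := he ζ
  rw [heval]
  refine ⟨?_, fun hζ ↦ norm_peak_le hac hbc hζ hsq,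
    fun hζ ↦ norm_peak_mul_dist_le hac hbc hζ hsq (hre hζ)⟩
  intro hζ
  rw [hζ] at hsq ⊢
  exact le_norm_peak hδ hac hbc hab hsq

lemma exists_peak [CompactSpace F] (hpc : IsPolyConvex1 F) {c : ℂ} (hc : c ∈ frontier F) {ρ ε : ℝ}
    (hρ : 0 < ρ) (hε : 0 < ε) :
    ∃ f : polynomialUniformAlgebra F, ∀ ζ : F, ((ζ : ℂ) = c → 2 ≤ ‖eval ζ f‖) ∧
      ‖eval ζ f‖ ≤ 704 ∧ (ρ ≤ dist (ζ : ℂ) c → ‖eval ζ f‖ ≤ ε) := by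
  obtain ⟨δ, hδ, hδρ, hδε⟩ : ∃ δ > 0, 9 * δ ≤ ρ ∧ 384 * δ ≤ ε * ρ :=
    ⟨min (ρ / 9) (ε * ρ / 384), by positivity, by linarith [min_le_left (ρ / 9) (ε * ρ / 384)],
      by linarith [min_le_right (ρ / 9) (ε * ρ / 384)]⟩
  obtain ⟨f, hf⟩ := exists_peak_of_scale hpc hc hδ
  refine ⟨((16 / δ : ℝ) : ℂ) • f, fun ζ ↦ ?_⟩
  obtain ⟨hat, hnear, hfar⟩ := hf ζ
  rw [map_smul, smul_eq_mul, norm_mul, Complex.norm_of_nonneg (by positivity), div_mul_eq_mul_div]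
  refine ⟨fun hζ ↦ ?_, ?_, fun hζ ↦ ?_⟩
  · rw [le_div_iff₀ hδ]
    linarith [hat hζ]
  · rw [div_le_iff₀ hδ]
    rcases le_total (dist (ζ : ℂ) c) (9 * δ) with hζ | hζ
    · linarith [hnear hζ]
    · nlinarith [hfar hζ, norm_nonneg (eval ζ f)]
  · have hdist : 0 < dist (ζ : ℂ) c := hρ.trans_le hζ
    rw [div_le_iff₀ hδ, ← mul_le_mul_iff_left₀ hdist]
    calc 16 * ‖eval ζ f‖ * dist (ζ : ℂ) c ≤ 384 * δ * δ := by linarith [hfar (hδρ.trans hζ)]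
      _ ≤ ε * ρ * δ := by gcongr
      _ ≤ ε * dist (ζ : ℂ) c * δ := by gcongr
      _ = ε * δ * dist (ζ : ℂ) c := by ring

theorem exists_polynomial_peak (hF : IsCompact F) (hpc : IsPolyConvex1 F) {c : ℂ}
    (hc : c ∈ frontier F) {ρ ε : ℝ} (hρ : 0 < ρ) (hε : 0 < ε) :
    ∃ q : Polynomial ℂ, 1 ≤ ‖q.eval c‖ ∧ ∀ ζ ∈ F, ‖q.eval ζ‖ ≤ 1000 ∧
      (ρ ≤ dist ζ c → ‖q.eval ζ‖ ≤ ε) := by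
  have := isCompact_iff_compactSpace.1 hF
  obtain ⟨f, hf⟩ := exists_peak hpc hc hρ (half_pos hε)
  obtain ⟨q, hq⟩ := exists_polynomial_norm_eval_sub_lt f (lt_min one_pos (half_pos hε))
  have happrox (ζ : F) : ‖eval ζ f - q.eval (ζ : ℂ)‖ < 1 ∧ ‖eval ζ f - q.eval (ζ : ℂ)‖ < ε / 2 :=
    lt_min_iff.1 (hq ζ)
  have hle (ζ : F) : ‖q.eval (ζ : ℂ)‖ ≤ ‖eval ζ f‖ + ‖eval ζ f - q.eval (ζ : ℂ)‖ :=
    norm_le_norm_add_norm_sub _ _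
  refine ⟨q, ?_, fun ζ hζ ↦ ⟨?_, fun hζρ ↦ ?_⟩⟩
  · have hcF : c ∈ F := hF.isClosed.frontier_subset hc
    linarith [(hf ⟨c, hcF⟩).1 rfl, (happrox ⟨c, hcF⟩).1,
      norm_le_norm_add_norm_sub' (eval ⟨c, hcF⟩ f) (q.eval c)]
  · linarith [(hf ⟨ζ, hζ⟩).2.1, (happrox ⟨ζ, hζ⟩).1, hle ⟨ζ, hζ⟩]
  · linarith [(hf ⟨ζ, hζ⟩).2.2 hζρ, (happrox ⟨ζ, hζ⟩).2, hle ⟨ζ, hζ⟩]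

end PeakFunction

section CauchyTransform

open MeasureTheory Metric

lemma setLIntegral_ball_zero_inv_enorm_le (r : ℝ) :
    ∫⁻ u in ball (0 : ℂ) r, ‖u‖ₑ⁻¹ ≤ ENNReal.ofReal (2 * Real.pi * r) := by
  rw [← lintegral_indicator measurableSet_ball, ← Complex.lintegral_comp_polarCoord_symm]
  calc ∫⁻ q in polarCoord.target, ENNReal.ofReal q.1 •
        (ball 0 r).indicator (fun u : ℂ ↦ ‖u‖ₑ⁻¹) (Complex.polarCoord.symm q)
      ≤ ∫⁻ q in polarCoord.target, (Ioo 0 r ×ˢ Ioo (-Real.pi) Real.pi).indicator 1 q := by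
        refine setLIntegral_mono' polarCoord.open_target.measurableSet fun q hq ↦ ?_
        have hq₁ : 0 < q.1 := hq.1
        have hnorm : ‖Complex.polarCoord.symm q‖ = q.1 := by
          rw [Complex.norm_polarCoord_symm, abs_of_pos hq₁]
        by_cases hqr : q.1 < r
        · have hmem : q ∈ Ioo 0 r ×ˢ Ioo (-Real.pi) Real.pi := ⟨⟨hq₁, hqr⟩, hq.2⟩
          rw [indicator_of_mem (by rwa [mem_ball_zero_iff, hnorm]),
            indicator_of_mem hmem, ← ofReal_norm, hnorm, smul_eq_mul, Pi.one_apply]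
          exact ENNReal.mul_inv_le_one _
        · rw [indicator_of_notMem (by rwa [mem_ball_zero_iff, hnorm]), smul_zero]
          exact zero_le
    _ ≤ volume (Ioo 0 r ×ˢ Ioo (-Real.pi) Real.pi) :=
        (setLIntegral_le_lintegral _ _).trans
          (lintegral_indicator_one (measurableSet_Ioo.prod measurableSet_Ioo)).le
    _ = ENNReal.ofReal (2 * Real.pi * r) := by
        rw [Measure.volume_eq_prod, Measure.prod_prod, Real.volume_Ioo, Real.volume_Ioo,
          sub_neg_eq_add, ← two_mul, sub_zero, mul_comm,
          ← ENNReal.ofReal_mul (by positivity)]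

lemma setLIntegral_inv_enorm_sub_le (S : Set ℂ) (ζ : ℂ) (r : ℝ) :
    ∫⁻ z in S, ‖z - ζ‖ₑ⁻¹ ≤
      ENNReal.ofReal (2 * Real.pi * r) + (ENNReal.ofReal r)⁻¹ * volume S := by
  calc ∫⁻ z in S, ‖z - ζ‖ₑ⁻¹
      ≤ ∫⁻ z in S, ((ball 0 r).indicator (fun u ↦ ‖u‖ₑ⁻¹) (z - ζ) + (ENNReal.ofReal r)⁻¹) := by
        refine lintegral_mono fun z ↦ ?_
        by_cases hz : z - ζ ∈ ball (0 : ℂ) r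
        · rw [indicator_of_mem hz]
          exact le_self_add
        · rw [indicator_of_notMem hz, zero_add, ENNReal.inv_le_inv, ← ofReal_norm]
          exact ENNReal.ofReal_le_ofReal (not_lt.1 (mem_ball_zero_iff.not.1 hz))
    _ = (∫⁻ z in S, (ball 0 r).indicator (fun u ↦ ‖u‖ₑ⁻¹) (z - ζ)) +
          (ENNReal.ofReal r)⁻¹ * volume S := by
        rw [lintegral_add_right _ measurable_const, setLIntegral_const]
    _ ≤ (∫⁻ z, (ball 0 r).indicator (fun u ↦ ‖u‖ₑ⁻¹) (z - ζ)) +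
          (ENNReal.ofReal r)⁻¹ * volume S := by
        gcongr
        exact Measure.restrict_le_self
    _ ≤ ENNReal.ofReal (2 * Real.pi * r) + (ENNReal.ofReal r)⁻¹ * volume S := by
        rw [lintegral_sub_right_eq_self (fun z ↦ (ball 0 r).indicator (fun u ↦ ‖u‖ₑ⁻¹) z),
          lintegral_indicator measurableSet_ball]
        gcongr
        exact setLIntegral_ball_zero_inv_enorm_le r

lemma setLIntegral_inv_enorm_sub_le_of_subset_closedBall {S : Set ℂ} {c : ℂ} {r : ℝ} (hr : 0 < r)
    (hS : S ⊆ closedBall c r) (ζ : ℂ) :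
    ∫⁻ z in S, ‖z - ζ‖ₑ⁻¹ ≤ ENNReal.ofReal (3 * Real.pi * r) := by
  have hvol : volume S ≤ ENNReal.ofReal (Real.pi * r ^ 2) := by
    refine (measure_mono hS).trans_eq ?_
    rw [Complex.volume_closedBall, mul_comm, ENNReal.ofReal_mul Real.pi_nonneg,
      ENNReal.ofReal_pow hr.le, ← NNReal.coe_real_pi, ENNReal.ofReal_coe_nnreal]
  calc ∫⁻ z in S, ‖z - ζ‖ₑ⁻¹
      ≤ ENNReal.ofReal (2 * Real.pi * r) + (ENNReal.ofReal r)⁻¹ * volume S :=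
        setLIntegral_inv_enorm_sub_le S ζ r
    _ ≤ ENNReal.ofReal (2 * Real.pi * r) +
        ENNReal.ofReal r⁻¹ * ENNReal.ofReal (Real.pi * r ^ 2) := by
        rw [ENNReal.ofReal_inv_of_pos hr]
        gcongr
    _ = ENNReal.ofReal (3 * Real.pi * r) := by
        rw [← ENNReal.ofReal_mul (by positivity), ← ENNReal.ofReal_add (by positivity)
          (by positivity)]
        congr 1
        field_simp
        ring

variable {E : Type*} [NormedAddCommGroup E] [NormedSpace ℂ E]

lemma integral_annulus_eq_setIntegral_circleMap {h : ℂ → E} {c : ℂ} {r R : ℝ} (hr : 0 < r) :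
    ∫ z in closedBall c R \ ball c r, (Complex.I * (z - c) / ‖z - c‖) • h z =
      ∫ q in Icc r R ×ˢ Ioo (-Real.pi) Real.pi,
        deriv (circleMap c q.1) q.2 • h (circleMap c q.1 q.2) := by
  have hsymm (q : ℝ × ℝ) : Complex.polarCoord.symm q + c = circleMap c q.1 q.2 := by
    rw [Complex.polarCoord_symm_apply, circleMap, Complex.exp_mul_I, add_comm]
    push_cast
    rfl
  have hset : Icc r R ×ˢ Ioo (-Real.pi) Real.pi =
      polarCoord.target ∩ Icc r R ×ˢ (univ : Set ℝ) := by
    have hIcc : Icc r R ⊆ Ioi 0 := fun s hs ↦ hr.trans_le hs.1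
    rw [polarCoord_target, prod_inter_prod, inter_univ, inter_eq_right.2 hIcc]
  rw [hset, ← setIntegral_indicator (measurableSet_Icc.prod .univ),
    ← integral_indicator (measurableSet_closedBall.diff measurableSet_ball),
    ← integral_add_right_eq_self _ c, ← Complex.integral_comp_polarCoord_symm]
  refine setIntegral_congr_fun polarCoord.open_target.measurableSet fun q hq ↦ ?_
  have hq₁ : 0 < q.1 := hq.1
  have hmem : circleMap c q.1 q.2 ∈ closedBall c R \ ball c r ↔
      q ∈ Icc r R ×ˢ (univ : Set ℝ) := by
    simp [abs_of_pos hq₁, and_comm, dist_eq_norm]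
  simp only [hsymm]
  by_cases hqr : q ∈ Icc r R ×ˢ (univ : Set ℝ)
  · rw [indicator_of_mem hqr, indicator_of_mem (hmem.2 hqr), circleMap_sub_center,
      norm_circleMap_zero, abs_of_pos hq₁, deriv_circleMap, ← Complex.coe_smul, smul_smul,
      mul_div_cancel₀ _ (Complex.ofReal_ne_zero.2 hq₁.ne'), mul_comm]
  · rw [indicator_of_notMem hqr, indicator_of_notMem (hmem.not.2 hqr), smul_zero]

lemma integral_annulus_eq_integral_circleIntegral {h : ℂ → E} {c : ℂ} {r R : ℝ} (hr : 0 < r)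
    (hrR : r ≤ R) (hh : ContinuousOn h (closedBall c R \ ball c r)) :
    ∫ z in closedBall c R \ ball c r, (Complex.I * (z - c) / ‖z - c‖) • h z =
      ∫ s in r..R, ∮ z in C(c, s), h z := by
  let G : ℝ × ℝ → E := fun q ↦ deriv (circleMap c q.1) q.2 • h (circleMap c q.1 q.2)
  have hG : IntegrableOn G (Icc r R ×ˢ Ioo (-Real.pi) Real.pi) := by
    refine (ContinuousOn.integrableOn_compact (isCompact_Icc.prod isCompact_Icc) ?_).mono_set
      (prod_mono_right Ioo_subset_Icc_self)
    have hcont : Continuous fun q : ℝ × ℝ ↦ circleMap c q.1 q.2 := by unfold circleMap; fun_prop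
    refine .smul (by simp only [deriv_circleMap, circleMap]; fun_prop)
      (hh.comp hcont.continuousOn fun q hq ↦ ?_)
    simpa [abs_of_pos (hr.trans_le hq.1.1), dist_eq_norm, and_comm] using hq.1
  have hperiod (s : ℝ) : Function.Periodic (fun θ ↦ G (s, θ)) (2 * Real.pi) := fun θ ↦ by
    simp only [G, deriv_circleMap, periodic_circleMap _ s θ]
  rw [integral_annulus_eq_setIntegral_circleMap hr, Measure.volume_eq_prod,
    setIntegral_prod _ hG, intervalIntegral.integral_of_le hrR, integral_Icc_eq_integral_Ioc]
  refine setIntegral_congr_fun measurableSet_Ioc fun s _ ↦ ?_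
  have hshift := (hperiod s).intervalIntegral_add_eq (-Real.pi) 0
  rw [show -Real.pi + 2 * Real.pi = Real.pi by ring, zero_add] at hshift
  rw [← integral_Ioc_eq_integral_Ioo,
    ← intervalIntegral.integral_of_le (by linarith [Real.pi_pos]), circleIntegral]
  exact hshift

end CauchyTransform

section Resolvent

open MeasureTheory Metric polynomialUniformAlgebra

lemma map_circleIntegral {E G : Type*} [NormedAddCommGroup E] [NormedSpace ℂ E] [CompleteSpace E]
    [NormedAddCommGroup G] [NormedSpace ℂ G] [CompleteSpace G] (L : E →L[ℂ] G) {f : ℂ → E}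
    {c : ℂ} {r : ℝ} (hf : CircleIntegrable f c r) :
    L (∮ z in C(c, r), f z) = ∮ z in C(c, r), L (f z) := by
  simp only [circleIntegral, ← L.intervalIntegral_comp_comm hf.out, map_smul]

variable {F : Set ℂ} [CompactSpace F]

lemma mem_resolventSet_coord {z : ℂ} (hz : z ∉ F) :
    z ∈ resolventSet ℂ (coord F : C(F, ℂ)) := by
  by_contra hspec
  change z ∈ spectrum ℂ (coord F : C(F, ℂ)) at hspec
  rw [ContinuousMap.spectrum_eq_range] at hspec
  obtain ⟨ζ, rfl⟩ := hspec
  exact hz ((eval_coord ζ).symm ▸ ζ.2 : eval ζ (coord F) ∈ F)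

lemma resolvent_coord_apply {z : ℂ} (hz : z ∉ F) (ζ : F) :
    resolvent (coord F : C(F, ℂ)) z ζ = (z - ζ)⁻¹ := by
  refine eq_inv_of_mul_eq_one_left ?_
  rw [← eval_coord ζ]
  exact congrArg (fun f : C(F, ℂ) ↦ f ζ) (Ring.inverse_mul_cancel _ (mem_resolventSet_coord hz))

lemma differentiableAt_resolvent_coord {z : ℂ} (hz : z ∉ F) :
    DifferentiableAt ℂ (resolvent (coord F : C(F, ℂ))) z :=
  (spectrum.hasDerivAt_resolvent_const_left (mem_resolventSet_coord hz)).differentiableAt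

lemma continuousOn_resolvent_coord {S : Set ℂ} (hS : Disjoint S F) :
    ContinuousOn (resolvent (coord F : C(F, ℂ))) S := fun _ hz ↦
  (differentiableAt_resolvent_coord (disjoint_left.1 hS hz)).continuousAt.continuousWithinAt

lemma norm_setIntegral_smul_resolvent_coord_le {S : Set ℂ} (hSm : MeasurableSet S)
    (hSF : Disjoint S F) {w : ℂ → ℂ} {M B : ℝ} (hM : 0 ≤ M) (hB : 0 ≤ B)
    (hint : IntegrableOn (fun z ↦ w z • resolvent (coord F : C(F, ℂ)) z) S)
    (hw : ∀ z ∈ S, ‖w z‖ ≤ M)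
    (hS : ∀ ζ : ℂ, ∫⁻ z in S, ‖z - ζ‖ₑ⁻¹ ≤ ENNReal.ofReal B) :
    ‖∫ z in S, w z • resolvent (coord F : C(F, ℂ)) z‖ ≤ M * B := by
  refine (ContinuousMap.norm_le _ (by positivity)).2 fun ζ ↦ ?_
  have heval : (∫ z in S, w z • resolvent (coord F : C(F, ℂ)) z) ζ =
      ∫ z in S, w z * (z - ζ)⁻¹ := by
    refine ((ContinuousMap.evalCLM ℂ ζ).integral_comp_comm hint).symm.trans
      (setIntegral_congr_fun hSm fun z hz ↦ ?_)
    simp [resolvent_coord_apply (disjoint_left.1 hSF hz)]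
  rw [heval, ← ENNReal.ofReal_le_ofReal_iff (by positivity), ofReal_norm]
  calc ‖∫ z in S, w z * (z - ζ)⁻¹‖ₑ
      ≤ ∫⁻ z in S, ‖w z * (z - ζ)⁻¹‖ₑ := enorm_integral_le_lintegral_enorm _
    _ ≤ ∫⁻ z in S, ENNReal.ofReal M * ‖z - ζ‖ₑ⁻¹ := by
        refine setLIntegral_mono' hSm fun z hz ↦ ?_
        have hne : z - ζ ≠ 0 := fun h ↦ disjoint_left.1 hSF hz (sub_eq_zero.1 h ▸ ζ.2)
        rw [enorm_mul, enorm_inv hne, ← ofReal_norm (w z)]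
        gcongr
        exact hw z hz
    _ = ENNReal.ofReal M * ∫⁻ z in S, ‖z - ζ‖ₑ⁻¹ :=
        lintegral_const_mul' _ _ ENNReal.ofReal_ne_top
    _ ≤ ENNReal.ofReal M * ENNReal.ofReal B := by gcongr; exact hS ζ
    _ = ENNReal.ofReal (M * B) := (ENNReal.ofReal_mul hM).symm

lemma circleIntegral_sub_smul_resolvent_coord {c : ℂ} {r : ℝ} (hr : 0 ≤ r) (hF : F ⊆ ball c r) :
    (∮ z in C(c, r), (z - c) • resolvent (coord F : C(F, ℂ)) z) =
      (2 * Real.pi * Complex.I : ℂ) • (coord F - algebraMap ℂ _ c : C(F, ℂ)) := by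
  have hd : Disjoint (sphere c r) F := sphere_disjoint_ball.mono_right hF
  have hint : CircleIntegrable (fun z ↦ (z - c) • resolvent (coord F : C(F, ℂ)) z) c r :=
    ContinuousOn.circleIntegrable hr
      ((by fun_prop : ContinuousOn (fun z ↦ z - c) _).smul (continuousOn_resolvent_coord hd))
  ext ζ
  have heval : (∮ z in C(c, r), (z - c) • resolvent (coord F : C(F, ℂ)) z) ζ =
      ∮ z in C(c, r), (z - ζ)⁻¹ • (z - c) := by
    refine (map_circleIntegral (ContinuousMap.evalCLM ℂ ζ) hint).trans
      (circleIntegral.integral_congr hr fun z hz ↦ ?_)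
    simp [resolvent_coord_apply (disjoint_left.1 hd hz), mul_comm]
  rw [heval, DifferentiableOn.circleIntegral_sub_inv_smul (c := c) (f := fun z ↦ z - c)
    (by fun_prop) (hF ζ.2)]
  change _ = (2 * Real.pi * Complex.I : ℂ) * (eval ζ (coord F) - c)
  rw [eval_coord, smul_eq_mul]

end Resolvent

section Separation

open MeasureTheory Metric polynomialUniformAlgebra

variable {E : Type*} [NormedAddCommGroup E] [NormedSpace ℂ E]

lemma circleIntegral_eq_of_differentiableAt_compl_singleton {g : ℂ → E} {c : ℂ}
    (hg : ∀ z ≠ c, DifferentiableAt ℂ g z) {r R : ℝ} (hr : 0 < r) (hR : 0 < R) :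
    (∮ z in C(c, r), g z) = ∮ z in C(c, R), g z := by
  wlog hrR : r ≤ R generalizing r R
  · exact (this hR hr (le_of_not_ge hrR)).symm
  have hne : ∀ z ∉ ball c r, z ≠ c := fun z hz hzc ↦ hz (hzc ▸ mem_ball_self hr)
  exact (Complex.circleIntegral_eq_of_differentiable_on_annulus_off_countable hr hrR
    countable_empty (fun z hz ↦ (hg z (hne z hz.2)).continuousAt.continuousWithinAt)
    fun z hz ↦ hg z (hne z fun h ↦ hz.1.2 (ball_subset_closedBall h))).symm

variable {F F₁ F₂ : Set ℂ} [CompactSpace F] [CompactSpace F₁] [CompactSpace F₂]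
  (L : C(F, ℂ) →L[ℂ] E) (L₁ : C(F₁, ℂ) →L[ℂ] E) (L₂ : C(F₂, ℂ) →L[ℂ] E)
  {f : ℂ → E} {c : ℂ}

lemma exists_differentiableAt_eq_map_resolvent (hcap : F₁ ∩ F₂ ⊆ {c})
    (hL : ∀ z ∉ F₁ ∪ F₂, L₁ (resolvent (coord F₁ : C(F₁, ℂ)) z) =
      L₂ (resolvent (coord F₂ : C(F₂, ℂ)) z)) :
    ∃ f : ℂ → E, (∀ z ≠ c, DifferentiableAt ℂ f z) ∧
      (∀ z ∉ F₁, f z = L₁ (resolvent (coord F₁ : C(F₁, ℂ)) z)) ∧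
      ∀ z ∉ F₂, f z = L₂ (resolvent (coord F₂ : C(F₂, ℂ)) z) := by
  classical
  let f : ℂ → E := fun z ↦ if z ∈ F₁ then L₂ (resolvent (coord F₂ : C(F₂, ℂ)) z)
    else L₁ (resolvent (coord F₁ : C(F₁, ℂ)) z)
  have hf₁ : ∀ z ∉ F₁, f z = L₁ (resolvent (coord F₁ : C(F₁, ℂ)) z) := fun z hz ↦ if_neg hz
  have hf₂ : ∀ z ∉ F₂, f z = L₂ (resolvent (coord F₂ : C(F₂, ℂ)) z) := fun z hz ↦ by
    by_cases hz₁ : z ∈ F₁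
    · exact if_pos hz₁
    · exact (hf₁ z hz₁).trans (hL z (not_or.2 ⟨hz₁, hz⟩))
  refine ⟨f, fun z hz ↦ ?_, hf₁, hf₂⟩
  have hmem : z ∉ F₁ ∩ F₂ := fun h ↦ hz (hcap h)
  rcases not_and_or.1 hmem with hzF | hzF
  · refine (L₁.differentiableAt.comp z
      (differentiableAt_resolvent_coord hzF)).congr_of_eventuallyEq ?_
    have hF₁ := isCompact_iff_compactSpace.2 ‹CompactSpace F₁›
    filter_upwards [hF₁.isClosed.isOpen_compl.mem_nhds hzF] using hf₁
  · refine (L₂.differentiableAt.comp z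
      (differentiableAt_resolvent_coord hzF)).congr_of_eventuallyEq ?_
    have hF₂ := isCompact_iff_compactSpace.2 ‹CompactSpace F₂›
    filter_upwards [hF₂.isClosed.isOpen_compl.mem_nhds hzF] using hf₂

variable [CompleteSpace E]

lemma circleIntegral_sub_smul_eq_map_coord_sub (hf : ∀ z ≠ c, DifferentiableAt ℂ f z)
    (hfL : ∀ z ∉ F, f z = L (resolvent (coord F : C(F, ℂ)) z)) {r : ℝ} (hr : 0 < r) :
    (∮ z in C(c, r), (z - c) • f z) =
      (2 * Real.pi * Complex.I : ℂ) • L (coord F - algebraMap ℂ _ c) := by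
  have hF := isCompact_iff_compactSpace.2 ‹CompactSpace F›
  obtain ⟨R, hR, hFR⟩ := hF.isBounded.subset_ball_lt 0 c
  have hd : Disjoint (sphere c R) F := sphere_disjoint_ball.mono_right hFR
  have hint : CircleIntegrable (fun z ↦ (z - c) • resolvent (coord F : C(F, ℂ)) z) c R :=
    ContinuousOn.circleIntegrable hR.le
      ((by fun_prop : ContinuousOn (fun z ↦ z - c) _).smul (continuousOn_resolvent_coord hd))
  calc (∮ z in C(c, r), (z - c) • f z)
      = ∮ z in C(c, R), (z - c) • f z :=
        circleIntegral_eq_of_differentiableAt_compl_singleton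
          (fun z hz ↦ (by fun_prop : DifferentiableAt ℂ (fun z ↦ z - c) z).smul (hf z hz)) hr hR
    _ = ∮ z in C(c, R), L ((z - c) • resolvent (coord F : C(F, ℂ)) z) :=
        circleIntegral.integral_congr hR.le fun z hz ↦ by
          simp only [hfL z (disjoint_left.1 hd hz), map_smul]
    _ = (2 * Real.pi * Complex.I : ℂ) • L (coord F - algebraMap ℂ _ c) := by
        rw [← map_circleIntegral L hint, circleIntegral_sub_smul_resolvent_coord hR.le hFR,
          map_smul]

lemma norm_setIntegral_smul_le_opNorm {S T : Set ℂ} (hS : MeasurableSet S) (hST : S ⊆ T)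
    (hT : IsCompact T) (hTF : Disjoint T F)
    (hfL : ∀ z ∉ F, f z = L (resolvent (coord F : C(F, ℂ)) z))
    {w : ℂ → ℂ} (hw : ContinuousOn w T) {M R : ℝ} (hM : 0 ≤ M) (hR : 0 < R)
    (hwM : ∀ z ∈ T, ‖w z‖ ≤ M) (hTR : T ⊆ closedBall c R) :
    ‖∫ z in S, w z • f z‖ ≤ ‖L‖ * (M * (3 * Real.pi * R)) := by
  have hint : IntegrableOn (fun z ↦ w z • resolvent (coord F : C(F, ℂ)) z) S :=
    ((hw.smul (continuousOn_resolvent_coord hTF)).integrableOn_compact hT).mono_set hST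
  have hcomm : ∫ z in S, w z • f z = L (∫ z in S, w z • resolvent (coord F : C(F, ℂ)) z) := by
    rw [← L.integral_comp_comm hint]
    exact setIntegral_congr_fun hS fun z hz ↦ by
      simp only [hfL z (disjoint_left.1 hTF (hST hz)), map_smul]
  rw [hcomm]
  exact L.le_opNorm_of_le (norm_setIntegral_smul_resolvent_coord_le hS (hTF.mono_left hST) hM
    (by positivity) hint (fun z hz ↦ hwM z (hST hz))
    (setLIntegral_inv_enorm_sub_le_of_subset_closedBall hR (hST.trans hTR)))

lemma norm_setIntegral_smul_le_opNorm_add {A : Set ℂ} (hA : IsCompact A) (hd : Disjoint A (F₁ ∩ F₂))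
    (hf : ContinuousOn f A)
    (hf₁ : ∀ z ∉ F₁, f z = L₁ (resolvent (coord F₁ : C(F₁, ℂ)) z))
    (hf₂ : ∀ z ∉ F₂, f z = L₂ (resolvent (coord F₂ : C(F₂, ℂ)) z))
    {w : ℂ → ℂ} (hw : ContinuousOn w A) {M R : ℝ} (hM : 0 ≤ M) (hR : 0 < R)
    (hwM : ∀ z ∈ A, ‖w z‖ ≤ M) (hAR : A ⊆ closedBall c R) :
    ‖∫ z in A, w z • f z‖ ≤ (‖L₁‖ + ‖L₂‖) * (M * (3 * Real.pi * R)) := by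
  have hF₁ := isCompact_iff_compactSpace.2 ‹CompactSpace F₁›
  have hF₂ := isCompact_iff_compactSpace.2 ‹CompactSpace F₂›
  obtain ⟨U, V, hU, hV, hF₁U, hF₂V, hUV⟩ := SeparatedNhds.of_isCompact_isCompact
    (hA.inter hF₁) (hA.inter hF₂)
    (disjoint_left.2 fun z hz₁ hz₂ ↦ disjoint_left.1 hd hz₁.1 ⟨hz₁.2, hz₂.2⟩)
  have hUV' : A ∩ U ⊆ A \ V := fun z hz ↦ ⟨hz.1, disjoint_left.1 hUV hz.2⟩
  have hint : IntegrableOn (fun z ↦ w z • f z) A := (hw.smul hf).integrableOn_compact hA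
  rw [← integral_inter_add_sdiff hU.measurableSet hint]
  have hU_le : ‖∫ z in A ∩ U, w z • f z‖ ≤ ‖L₂‖ * (M * (3 * Real.pi * R)) :=
    norm_setIntegral_smul_le_opNorm L₂ (hA.measurableSet.inter hU.measurableSet) hUV' (hA.diff hV)
      (disjoint_left.2 fun z hz hzF ↦ hz.2 (hF₂V ⟨hz.1, hzF⟩)) hf₂ (hw.mono sdiff_subset) hM hR
      (fun z hz ↦ hwM z hz.1) (sdiff_subset.trans hAR)
  have hdiff_le : ‖∫ z in A \ U, w z • f z‖ ≤ ‖L₁‖ * (M * (3 * Real.pi * R)) :=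
    norm_setIntegral_smul_le_opNorm L₁ (hA.measurableSet.diff hU.measurableSet) .rfl (hA.diff hU)
      (disjoint_left.2 fun z hz hzF ↦ hz.2 (hF₁U ⟨hz.1, hzF⟩)) hf₁ (hw.mono sdiff_subset) hM hR
      (fun z hz ↦ hwM z hz.1) (sdiff_subset.trans hAR)
  rw [add_comm, add_mul]
  exact norm_add_le_of_le hdiff_le hU_le

/-- The integral `J` of `(z - c) f` over a circle around `c` does not depend on the radius, so
averaging it over the radii in `[ε, 2ε]` bounds `J` by a multiple of `ε`. -/
lemma norm_two_pi_I_smul_map_coord_sub_le (hcap : F₁ ∩ F₂ ⊆ {c})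
    (hf : ∀ z ≠ c, DifferentiableAt ℂ f z)
    (hf₁ : ∀ z ∉ F₁, f z = L₁ (resolvent (coord F₁ : C(F₁, ℂ)) z))
    (hf₂ : ∀ z ∉ F₂, f z = L₂ (resolvent (coord F₂ : C(F₂, ℂ)) z)) {ε : ℝ} (hε : 0 < ε) :
    ‖(2 * Real.pi * Complex.I : ℂ) • L₁ (coord F₁ - algebraMap ℂ _ c)‖ ≤
      (‖L₁‖ + ‖L₂‖) * (12 * Real.pi) * ε := by
  set J := (2 * Real.pi * Complex.I : ℂ) • L₁ (coord F₁ - algebraMap ℂ _ c)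
  set A := closedBall c (2 * ε) \ ball c ε
  have hAc : A ⊆ {c}ᶜ := fun z hz hzc ↦ hz.2 (hzc ▸ mem_ball_self hε)
  have hfA : ContinuousOn f A := fun z hz ↦ (hf z (hAc hz)).continuousAt.continuousWithinAt
  have havg : ∫ z in A, (Complex.I * (z - c) / ‖z - c‖ * (z - c)) • f z = (ε : ℂ) • J := by
    have hcircle : ∀ s ∈ uIcc ε (2 * ε), (∮ z in C(c, s), (z - c) • f z) = J := fun s hs ↦ by
      rw [uIcc_of_le (by linarith)] at hs
      exact circleIntegral_sub_smul_eq_map_coord_sub L₁ hf hf₁ (hε.trans_le hs.1)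
    simp only [mul_smul]
    rw [integral_annulus_eq_integral_circleIntegral (h := fun z ↦ (z - c) • f z) hε (by linarith)
      ((by fun_prop : ContinuousOn (fun z ↦ z - c) A).smul hfA),
      intervalIntegral.integral_congr hcircle, intervalIntegral.integral_const, two_mul,
      add_sub_cancel_right, Complex.coe_smul]
  have hw : ContinuousOn (fun z ↦ Complex.I * (z - c) / ‖z - c‖ * (z - c)) A := by
    refine .mul (.div (by fun_prop) (by fun_prop) fun z hz ↦ ?_) (by fun_prop)
    simpa [sub_eq_zero] using hAc hz
  have hw_le : ∀ z ∈ A, ‖Complex.I * (z - c) / ‖z - c‖ * (z - c)‖ ≤ 2 * ε := fun z hz ↦ by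
    have hne : ‖z - c‖ ≠ 0 := norm_ne_zero_iff.2 (sub_ne_zero.2 (hAc hz))
    simpa [hne] using mem_closedBall_iff_norm.1 hz.1
  have hle := norm_setIntegral_smul_le_opNorm_add L₁ L₂
    ((isCompact_closedBall c (2 * ε)).diff isOpen_ball)
    ((disjoint_compl_left.mono_left hAc).mono_right hcap) hfA hf₁ hf₂ hw
    (by positivity) (by positivity) hw_le sdiff_subset
  rw [havg, norm_smul, Complex.norm_real, Real.norm_of_nonneg hε.le] at hle
  nlinarith

theorem map_coord_sub_eq_zero (hcap : F₁ ∩ F₂ ⊆ {c})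
    (hL : ∀ z ∉ F₁ ∪ F₂, L₁ (resolvent (coord F₁ : C(F₁, ℂ)) z) =
      L₂ (resolvent (coord F₂ : C(F₂, ℂ)) z)) :
    L₁ (coord F₁ - algebraMap ℂ _ c) = 0 := by
  obtain ⟨f, hf, hf₁, hf₂⟩ := exists_differentiableAt_eq_map_resolvent L₁ L₂ hcap hL
  have hlim : Tendsto (fun ε : ℝ ↦ (‖L₁‖ + ‖L₂‖) * (12 * Real.pi) * ε) (𝓝[>] 0) (𝓝 0) :=
    tendsto_nhdsWithin_of_tendsto_nhds (Continuous.tendsto' (by fun_prop) _ _ (mul_zero _))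
  have hle := ge_of_tendsto hlim (eventually_mem_nhdsWithin.mono fun ε hε ↦
    norm_two_pi_I_smul_map_coord_sub_le L₁ L₂ hcap hf hf₁ hf₂ hε)
  exact (smul_eq_zero.1 (norm_le_zero_iff.1 hle)).resolve_left Complex.two_pi_I_ne_zero

/-- The canonical map `P(F₁ ∪ F₂) → C(F₁) × C(F₂)`. -/
def restrictProd (F₁ F₂ : Set ℂ) [CompactSpace F₁] [CompactSpace F₂] [CompactSpace ↥(F₁ ∪ F₂)] :
    polynomialUniformAlgebra (F₁ ∪ F₂) →ₐ[ℂ] C(F₁, ℂ) × C(F₂, ℂ) :=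
  ((ContinuousMap.compRightAlgHom ℂ ℂ ⟨_, continuous_inclusion subset_union_left⟩).prod
    (ContinuousMap.compRightAlgHom ℂ ℂ ⟨_, continuous_inclusion subset_union_right⟩)).comp
    (Subalgebra.val _)

lemma restrictProd_apply_fst [CompactSpace ↥(F₁ ∪ F₂)] (f : polynomialUniformAlgebra (F₁ ∪ F₂))
    (ζ : F₁) : (restrictProd F₁ F₂ f).1 ζ = eval ⟨ζ, Or.inl ζ.2⟩ f := rfl

lemma restrictProd_apply_snd [CompactSpace ↥(F₁ ∪ F₂)] (f : polynomialUniformAlgebra (F₁ ∪ F₂))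
    (ζ : F₂) : (restrictProd F₁ F₂ f).2 ζ = eval ⟨ζ, Or.inr ζ.2⟩ f := rfl

lemma eval_resolvent_coord {z : ℂ} (hz : z ∉ polyHull1 F) (ζ : F) :
    eval ζ (resolvent (coord F) z) = (z - ζ)⁻¹ := by
  have hunit : IsUnit (algebraMap ℂ (polynomialUniformAlgebra F) z - coord F) := by
    by_contra hspec
    exact hz (spectrum_coord_subset (show z ∈ spectrum ℂ (coord F) from hspec))
  refine eq_inv_of_mul_eq_one_left ?_
  have hmul := congrArg (eval ζ) (Ring.inverse_mul_cancel _ hunit)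
  rwa [map_mul, map_sub, AlgHom.commutes, eval_coord, map_one] at hmul

lemma restrictProd_resolvent_coord [CompactSpace ↥(F₁ ∪ F₂)] (hpc : IsPolyConvex1 (F₁ ∪ F₂))
    {z : ℂ} (hz : z ∉ F₁ ∪ F₂) : restrictProd F₁ F₂ (resolvent (coord (F₁ ∪ F₂)) z) =
      (resolvent (coord F₁ : C(F₁, ℂ)) z, resolvent (coord F₂ : C(F₂, ℂ)) z) := by
  have heval := eval_resolvent_coord (F := F₁ ∪ F₂) (z := z) (by rwa [hpc])
  refine Prod.ext (ContinuousMap.ext fun ζ ↦ ?_) (ContinuousMap.ext fun ζ ↦ ?_)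
  · exact (heval ⟨ζ, Or.inl ζ.2⟩).trans (resolvent_coord_apply (not_or.1 hz).1 ζ).symm
  · exact (heval ⟨ζ, Or.inr ζ.2⟩).trans (resolvent_coord_apply (not_or.1 hz).2 ζ).symm

lemma coord_sub_prod_zero_mem_closure_range [CompactSpace ↥(F₁ ∪ F₂)]
    (hpc : IsPolyConvex1 (F₁ ∪ F₂)) (hcap : F₁ ∩ F₂ ⊆ {c}) :
    ((coord F₁ : C(F₁, ℂ)) - algebraMap ℂ _ c, (0 : C(F₂, ℂ))) ∈
      closure (range (restrictProd F₁ F₂)) := by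
  let W : Submodule ℂ (C(F₁, ℂ) × C(F₂, ℂ)) :=
    (LinearMap.range (restrictProd F₁ F₂).toLinearMap).topologicalClosure
  have : IsClosed (W : Set (C(F₁, ℂ) × C(F₂, ℂ))) := Submodule.isClosed_topologicalClosure _
  let L₁ : C(F₁, ℂ) →L[ℂ] _ ⧸ W := W.mkQL.comp (.inl ℂ _ _)
  let L₂ : C(F₂, ℂ) →L[ℂ] _ ⧸ W := W.mkQL.comp (.inr ℂ _ _)
  have hzero : L₁ (coord F₁ - algebraMap ℂ _ c) = 0 := by
    refine map_coord_sub_eq_zero L₁ (-L₂) hcap fun z hz ↦ ?_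
    have hmem : (resolvent (coord F₁ : C(F₁, ℂ)) z, resolvent (coord F₂ : C(F₂, ℂ)) z) ∈ W :=
      Submodule.le_topologicalClosure _ ⟨_, restrictProd_resolvent_coord hpc hz⟩
    rw [neg_apply, ← add_eq_zero_iff_eq_neg]
    calc L₁ (resolvent _ z) + L₂ (resolvent _ z)
        = W.mkQL (resolvent (coord F₁ : C(F₁, ℂ)) z, resolvent (coord F₂ : C(F₂, ℂ)) z) := by
          simp only [L₁, L₂, ContinuousLinearMap.comp_apply, ← map_add]
          simp
      _ = 0 := (Submodule.Quotient.mk_eq_zero W).2 hmem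
  exact (Submodule.Quotient.mk_eq_zero W).1 hzero

theorem exists_polynomial_separating {F₁ F₂ : Set ℂ} (hF₁ : IsCompact F₁) (hF₂ : IsCompact F₂)
    (hpc : IsPolyConvex1 (F₁ ∪ F₂)) (hcap : F₁ ∩ F₂ ⊆ {c}) {ε : ℝ} (hε : 0 < ε) :
    ∃ q : Polynomial ℂ, (∀ z ∈ F₁, ‖q.eval z - (z - c)‖ ≤ ε) ∧ ∀ z ∈ F₂, ‖q.eval z‖ ≤ ε := by
  have := isCompact_iff_compactSpace.1 hF₁
  have := isCompact_iff_compactSpace.1 hF₂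
  have := isCompact_iff_compactSpace.1 (hF₁.union hF₂)
  obtain ⟨_, ⟨f, rfl⟩, hf⟩ := Metric.mem_closure_iff.1
    (coord_sub_prod_zero_mem_closure_range hpc hcap) (ε / 2) (half_pos hε)
  obtain ⟨q, hq⟩ := exists_polynomial_norm_eval_sub_lt f (half_pos hε)
  rw [Prod.dist_eq, max_lt_iff] at hf
  refine ⟨q, fun z hz ↦ ?_, fun z hz ↦ ?_⟩
  · have hf₁ := (ContinuousMap.dist_apply_le_dist (⟨z, hz⟩ : F₁)).trans_lt hf.1
    have hcoord : ((coord F₁ : C(F₁, ℂ)) - algebraMap ℂ C(F₁, ℂ) c) ⟨z, hz⟩ = z - c :=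
      congrArg (· - c) (eval_coord ⟨z, hz⟩)
    rw [restrictProd_apply_fst, hcoord, dist_comm, dist_eq_norm] at hf₁
    linarith [norm_sub_le_norm_sub_add_norm_sub (q.eval z) (eval ⟨z, Or.inl hz⟩ f) (z - c),
      norm_sub_rev (q.eval z) (eval ⟨z, Or.inl hz⟩ f), hq ⟨z, Or.inl hz⟩]
  · have hf₂ := (ContinuousMap.dist_apply_le_dist (⟨z, hz⟩ : F₂)).trans_lt hf.2
    rw [restrictProd_apply_snd, ContinuousMap.zero_apply, dist_comm, dist_zero_right] at hf₂
    linarith [norm_le_norm_add_norm_sub (eval ⟨z, Or.inr hz⟩ f) (q.eval z), hq ⟨z, Or.inr hz⟩]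

end Separation

section FrontierUnion

open Metric

lemma isPreconnected_ball_sdiff_singleton (c : ℂ) {r : ℝ} (hr : 0 < r) :
    IsPreconnected (ball c r \ {c}) := by
  have himage : (fun z ↦ c + Complex.exp z) '' {z | z.re < Real.log r} = ball c r \ {c} := by
    refine Subset.antisymm (image_subset_iff.2 fun z hz ↦ ⟨?_, by simp⟩) fun z ⟨hz, hzc⟩ ↦ ?_
    · rwa [mem_ball_iff_norm, add_sub_cancel_left, Complex.norm_exp, ← Real.lt_log_iff_exp_lt hr]
    · have hne : z - c ≠ 0 := sub_ne_zero.2 hzc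
      refine ⟨Complex.log (z - c), ?_, by simp only [Complex.exp_log hne, add_sub_cancel]⟩
      rw [mem_ofPred_eq, Complex.log_re]
      exact Real.log_lt_log (norm_pos_iff.2 hne) (mem_ball_iff_norm.1 hz)
  rw [← himage]
  exact (convex_halfSpace_re_lt _).isPreconnected.image _ (by fun_prop)

lemma mem_frontier_union {F₁ F₂ : Set ℂ} (hF₁ : IsClosed F₁) (hF₂ : IsClosed F₂) {c : ℂ}
    (hcap : F₁ ∩ F₂ ⊆ {c}) (hc₁ : c ∈ frontier F₁) (hc₂ : c ∈ frontier F₂) :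
    c ∈ frontier (F₁ ∪ F₂) := by
  refine ⟨closure_mono subset_union_left hc₁.1, fun hint ↦ ?_⟩
  obtain ⟨r, hr, hball⟩ := Metric.mem_nhds_iff.1 (mem_interior_iff_mem_nhds.1 hint)
  have hmem_interior {F : Set ℂ} (hF : IsClosed F) (hc : c ∈ frontier F)
      (hsub : ball c r \ {c} ⊆ F) : c ∈ interior F :=
    mem_interior.2 ⟨ball c r, (sdiff_singleton_subset_iff.1 hsub).trans
      (insert_subset (hF.frontier_subset hc) .rfl), isOpen_ball, mem_ball_self hr⟩
  have hdisj : (ball c r \ {c}) ∩ (F₁ ∩ F₂) = ∅ :=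
    (disjoint_sdiff_left.mono_right hcap).inter_eq
  rcases isPreconnected_iff_subset_of_disjoint_closed.1 (isPreconnected_ball_sdiff_singleton c hr)
    F₁ F₂ hF₁ hF₂ (sdiff_subset.trans hball) hdisj with hsub | hsub
  · exact hc₁.2 (hmem_interior hF₁ hc₁ hsub)
  · exact hc₂.2 (hmem_interior hF₂ hc₂ hsub)

end FrontierUnion

section PolynomialHull

variable {n : ℕ} {K K₁ K₂ : Set (Fin n → ℂ)} {F F₁ F₂ : Set ℂ} {x : Fin n → ℂ}
  {p : MvPolynomial (Fin n) ℂ}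

lemma continuous_mvEval (p : MvPolynomial (Fin n) ℂ) : Continuous (mvEval p) :=
  MvPolynomial.continuous_eval p

lemma mvEval_aeval (p : MvPolynomial (Fin n) ℂ) (q : Polynomial ℂ) (z : Fin n → ℂ) :
    mvEval (Polynomial.aeval p q) z = q.eval (mvEval p z) := by
  have h := Polynomial.aeval_algHom_apply (MvPolynomial.aeval z : _ →ₐ[ℂ] ℂ) p q
  simp only [MvPolynomial.aeval_eq_eval, Polynomial.coe_aeval_eq_eval] at h
  exact h.symm

lemma norm_mvEval_le_of_mem_polyHull (hx : x ∈ polyHull K) {r : MvPolynomial (Fin n) ℂ} {C : ℝ}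
    (hC : 0 ≤ C) (hr : ∀ y ∈ K, ‖mvEval r y‖ ≤ C) : ‖mvEval r x‖ ≤ C :=
  (hx r).trans (Real.sSup_le (forall_mem_image.2 hr) hC)

lemma norm_mvEval_le_sSup (hK : IsCompact K) (r : MvPolynomial (Fin n) ℂ) (hx : x ∈ K) :
    ‖mvEval r x‖ ≤ sSup ((fun w ↦ ‖mvEval r w‖) '' K) :=
  le_csSup (hK.image (continuous_mvEval r).norm).bddAbove (mem_image_of_mem _ hx)

lemma sSup_norm_mvEval_nonneg (K : Set (Fin n → ℂ)) (r : MvPolynomial (Fin n) ℂ) :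
    0 ≤ sSup ((fun w ↦ ‖mvEval r w‖) '' K) :=
  Real.sSup_nonneg (forall_mem_image.2 fun _ _ ↦ norm_nonneg _)

lemma subset_polyHull (hK : IsCompact K) : K ⊆ polyHull K := fun _ hx r ↦
  norm_mvEval_le_sSup hK r hx

lemma mapsTo_mvEval_polyHull (hF : IsCompact F) (hp : MapsTo (mvEval p) K F) :
    MapsTo (mvEval p) (polyHull K) (polyHull1 F) := fun x hx q ↦ by
  rw [← mvEval_aeval]
  refine norm_mvEval_le_of_mem_polyHull hx
    (Real.sSup_nonneg (forall_mem_image.2 fun _ _ ↦ norm_nonneg _)) fun y hy ↦ ?_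
  rw [mvEval_aeval]
  exact norm_eval_le_sSup hF q (hp hy)

lemma le_of_forall_mul_pow_le_mul_pow {a b c M : ℝ} (ha : 0 ≤ a) (hc : 0 < c)
    (h : ∀ m : ℕ, c * b ^ m ≤ M * a ^ m) : b ≤ a := by
  by_contra! hab
  have hb : 0 < b := ha.trans_lt hab
  have hlim : Tendsto (fun m : ℕ ↦ M * (a / b) ^ m) atTop (𝓝 (M * 0)) :=
    (tendsto_pow_atTop_nhds_zero_of_lt_one (div_nonneg ha hb.le)
      ((div_lt_one hb).2 hab)).const_mul M
  have hle : c ≤ M * 0 := ge_of_tendsto' hlim fun m ↦ by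
    rw [div_pow, ← mul_div_assoc, le_div_iff₀ (pow_pos hb m)]
    exact h m
  linarith

lemma mul_norm_mvEval_le_of_forall_exists_polynomial (hK : IsCompact K) (hx : x ∈ polyHull K)
    {S : Set (Fin n → ℂ)} {c M : ℝ} (hM : 0 ≤ M)
    (hq : ∀ ε > 0, ∃ q : Polynomial ℂ, c ≤ ‖q.eval (mvEval p x)‖ ∧
      (∀ y ∈ K ∩ S, ‖q.eval (mvEval p y)‖ ≤ M) ∧ ∀ y ∈ K \ S, ‖q.eval (mvEval p y)‖ ≤ ε)
    {r : MvPolynomial (Fin n) ℂ} {A : ℝ} (hA : 0 ≤ A) (hr : ∀ y ∈ K ∩ S, ‖mvEval r y‖ ≤ A) :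
    c * ‖mvEval r x‖ ≤ M * A := by
  refine le_of_forall_pos_le_add fun δ hδ ↦ ?_
  set C := sSup ((fun w ↦ ‖mvEval r w‖) '' K)
  have hC : 0 ≤ C := sSup_norm_mvEval_nonneg K r
  obtain ⟨q, hqx, hqS, hqε⟩ := hq (δ / (C + 1)) (by positivity)
  have hmul (z : Fin n → ℂ) : ‖mvEval (Polynomial.aeval p q * r) z‖ =
      ‖q.eval (mvEval p z)‖ * ‖mvEval r z‖ := by
    rw [← mvEval_aeval, ← norm_mul, mvEval, map_mul, mvEval, mvEval]
  calc c * ‖mvEval r x‖ ≤ ‖mvEval (Polynomial.aeval p q * r) x‖ := by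
        rw [hmul]
        gcongr
    _ ≤ M * A + δ := norm_mvEval_le_of_mem_polyHull hx (by positivity) fun y hy ↦ by
        rw [hmul]
        by_cases hyS : y ∈ S
        · nlinarith [mul_le_mul (hqS y ⟨hy, hyS⟩) (hr y ⟨hy, hyS⟩) (norm_nonneg _) hM]
        · have hrC : ‖mvEval r y‖ ≤ C + 1 := by linarith [norm_mvEval_le_sSup hK r hy]
          have hle := mul_le_mul (hqε y ⟨hy, hyS⟩) hrC (norm_nonneg _) (by positivity)
          rw [div_mul_cancel₀ δ (by positivity)] at hle
          nlinarith

/-- The previous bound for all powers of `r` removes the constants `c` and `M`. -/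
lemma norm_mvEval_le_of_forall_exists_polynomial (hK : IsCompact K) (hx : x ∈ polyHull K)
    {S : Set (Fin n → ℂ)} {c M : ℝ} (hc : 0 < c) (hM : 0 ≤ M)
    (hq : ∀ ε > 0, ∃ q : Polynomial ℂ, c ≤ ‖q.eval (mvEval p x)‖ ∧
      (∀ y ∈ K ∩ S, ‖q.eval (mvEval p y)‖ ≤ M) ∧ ∀ y ∈ K \ S, ‖q.eval (mvEval p y)‖ ≤ ε)
    {r : MvPolynomial (Fin n) ℂ} {A : ℝ} (hA : 0 ≤ A) (hr : ∀ y ∈ K ∩ S, ‖mvEval r y‖ ≤ A) :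
    ‖mvEval r x‖ ≤ A := by
  have hpow (m : ℕ) (z : Fin n → ℂ) : ‖mvEval (r ^ m) z‖ = ‖mvEval r z‖ ^ m := by
    rw [← norm_pow, mvEval, map_pow, mvEval]
  refine le_of_forall_mul_pow_le_mul_pow (M := M) hA hc fun m ↦ ?_
  rw [← hpow]
  refine mul_norm_mvEval_le_of_forall_exists_polynomial hK hx hM hq (pow_nonneg hA m) fun y hy ↦ ?_
  rw [hpow]
  exact pow_le_pow_left₀ (norm_nonneg _) (hr y hy) m

theorem mem_polyHull_fiber (hK : IsCompact K) (hF : IsCompact F) (hpc : IsPolyConvex1 F)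
    (hp : MapsTo (mvEval p) K F) (hx : x ∈ polyHull K) (hpx : mvEval p x ∈ frontier F) :
    x ∈ polyHull ({z | mvEval p z = mvEval p x} ∩ K) := by
  have hfiber : IsCompact ({z | mvEval p z = mvEval p x} ∩ K) :=
    hK.inter_left (isClosed_eq (continuous_mvEval p) continuous_const)
  intro r
  refine le_of_forall_gt_imp_ge_of_dense fun A hA ↦ ?_
  have hA₀ : 0 ≤ A := (sSup_norm_mvEval_nonneg _ r).trans hA.le
  have hlarge : IsCompact (K ∩ {y | A ≤ ‖mvEval r y‖}) :=
    hK.inter_right (isClosed_le continuous_const (continuous_mvEval r).norm)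
  obtain ⟨ρ, hρ, hρA⟩ : ∃ ρ > 0, ∀ y ∈ K ∩ {y | A ≤ ‖mvEval r y‖},
      ρ ≤ dist (mvEval p y) (mvEval p x) := by
    refine hlarge.exists_forall_le'
      ((continuous_mvEval p).dist continuous_const).continuousOn fun y hy ↦ dist_pos.2 fun hpy ↦ ?_
    exact (hA.trans_le hy.2).not_ge (norm_mvEval_le_sSup hfiber r ⟨hpy, hy.1⟩)
  refine norm_mvEval_le_of_forall_exists_polynomial (p := p) (c := 1) (M := 1000) hK hx
    (S := {y | dist (mvEval p y) (mvEval p x) < ρ}) one_pos (by norm_num) (fun ε hε ↦ ?_) hA₀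
    fun y hy ↦ ?_
  · obtain ⟨q, hqx, hq⟩ := exists_polynomial_peak hF hpc hpx hρ hε
    exact ⟨q, hqx, fun y hy ↦ (hq _ (hp hy.1)).1, fun y hy ↦ (hq _ (hp hy.1)).2 (not_lt.1 hy.2)⟩
  · by_contra! hlt
    exact (hρA y ⟨hy.1, hlt.le⟩).not_gt hy.2

theorem mem_polyHull_left_of_mvEval_mem (hK₁ : IsCompact K₁) (hK₂ : IsCompact K₂)
    (hF₁ : IsCompact F₁) (hF₂ : IsCompact F₂) (hpc : IsPolyConvex1 (F₁ ∪ F₂)) {c : ℂ}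
    (hcap : F₁ ∩ F₂ ⊆ {c}) (hp₁ : MapsTo (mvEval p) K₁ F₁) (hp₂ : MapsTo (mvEval p) K₂ F₂)
    (hx : x ∈ polyHull (K₁ ∪ K₂)) (hpx : mvEval p x ∈ F₁) (hne : mvEval p x ≠ c) :
    x ∈ polyHull K₁ := by
  intro r
  set δ := ‖mvEval p x - c‖ / 2 with hδ
  have hδ₀ : 0 < δ := half_pos (norm_pos_iff.2 (sub_ne_zero.2 hne))
  obtain ⟨C, hC⟩ := hF₁.exists_bound_of_continuousOn (f := fun z ↦ z - c) (by fun_prop)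
  have hC₀ : 0 ≤ C := (norm_nonneg _).trans (hC _ hpx)
  refine norm_mvEval_le_of_forall_exists_polynomial (p := p) (c := δ) (M := C + δ)
    (hK₁.union hK₂) hx (S := K₁) hδ₀ (by positivity) (fun ε hε ↦ ?_)
    (sSup_norm_mvEval_nonneg K₁ r) fun y hy ↦ norm_mvEval_le_sSup hK₁ r hy.2
  obtain ⟨q, hq₁, hq₂⟩ := exists_polynomial_separating hF₁ hF₂ hpc hcap (lt_min hε hδ₀)
  have hqδ (z : ℂ) (hz : z ∈ F₁) : ‖q.eval z - (z - c)‖ ≤ δ := (hq₁ z hz).trans (min_le_right _ _)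
  refine ⟨q, ?_, fun y hy ↦ ?_, fun y hy ↦ ?_⟩
  · linarith [norm_le_norm_add_norm_sub (q.eval (mvEval p x)) (mvEval p x - c), hqδ _ hpx]
  · linarith [norm_le_norm_add_norm_sub' (q.eval (mvEval p y)) (mvEval p y - c), hqδ _ (hp₁ hy.2),
      hC _ (hp₁ hy.2)]
  · exact (hq₂ _ (hp₂ (hy.1.resolve_left hy.2))).trans (min_le_left _ _)

end PolynomialHull

theorem kallin_lemma_general {n : ℕ} {K₁ K₂ : Set (Fin n → ℂ)} {p : MvPolynomial (Fin n) ℂ}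
    {F₁ F₂ : Set ℂ} (hK₁cpt : IsCompact K₁) (hK₁pc : IsPolyConvex K₁)
    (hK₂cpt : IsCompact K₂) (hK₂pc : IsPolyConvex K₂)
    (hp₁ : MapsTo (mvEval p) K₁ F₁) (hp₂ : MapsTo (mvEval p) K₂ F₂)
    (hF₁cpt : IsCompact F₁) (hF₂cpt : IsCompact F₂)
    (hF₁pc : IsPolyConvex1 F₁) (hF₂pc : IsPolyConvex1 F₂)
    (hcap : F₁ ∩ F₂ = {0}) (h0₁ : (0 : ℂ) ∈ frontier F₁) (h0₂ : (0 : ℂ) ∈ frontier F₂)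
    (hfiber : IsPolyConvex ({z | mvEval p z = 0} ∩ (K₁ ∪ K₂))) :
    IsPolyConvex (K₁ ∪ K₂) := by
  have hKcpt := hK₁cpt.union hK₂cpt
  have hFcpt := hF₁cpt.union hF₂cpt
  have hFpc := hF₁pc.union hF₂pc hF₁cpt hF₂cpt (hcap ▸ isPreconnected_singleton)
  have h0 := mem_frontier_union hF₁cpt.isClosed hF₂cpt.isClosed hcap.subset h0₁ h0₂
  have hp := hp₁.union_union hp₂
  refine Subset.antisymm (fun x hx ↦ ?_) (subset_polyHull hKcpt)
  have hpx : mvEval p x ∈ F₁ ∪ F₂ := hFpc ▸ mapsTo_mvEval_polyHull hFcpt hp hx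
  by_cases hpx₀ : mvEval p x = 0
  · have hmem := mem_polyHull_fiber hKcpt hFcpt hFpc hp hx (hpx₀ ▸ h0)
    rw [hpx₀, hfiber] at hmem
    exact hmem.2
  · rcases hpx with hpx | hpx
    · exact .inl <| hK₁pc ▸ mem_polyHull_left_of_mvEval_mem hK₁cpt hK₂cpt hF₁cpt hF₂cpt hFpc
        hcap.subset hp₁ hp₂ hx hpx hpx₀
    · rw [union_comm] at hx hFpc
      exact .inr <| hK₂pc ▸ mem_polyHull_left_of_mvEval_mem hK₂cpt hK₁cpt hF₂cpt hF₁cpt hFpc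
        (inter_comm F₁ F₂ ▸ hcap.subset) hp₂ hp₁ hx hpx hpx₀

/-- Kallin's Lemma. -/
theorem kallin_lemma (n : ℕ) (K₁ K₂ : Set (Fin n → ℂ))
    (hK₁cpt : IsCompact K₁) (hK₁pc : IsPolyConvex K₁)
    (hK₂cpt : IsCompact K₂) (hK₂pc : IsPolyConvex K₂)
    (p : MvPolynomial (Fin n) ℂ) (F₁ F₂ : Set ℂ)
    (hF₁ : F₁ = mvEval p '' K₁) (hF₂ : F₂ = mvEval p '' K₂)
    (hF₁cpt : IsCompact F₁) (hF₂cpt : IsCompact F₂)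
    (hF₁pc : IsPolyConvex1 F₁) (hF₂pc : IsPolyConvex1 F₂)
    (hcap : F₁ ∩ F₂ = {0}) (h0₁ : (0 : ℂ) ∈ frontier F₁) (h0₂ : (0 : ℂ) ∈ frontier F₂)
    (hfiber : IsPolyConvex ({z | mvEval p z = 0} ∩ (K₁ ∪ K₂))) :
    IsPolyConvex (K₁ ∪ K₂) :=
  kallin_lemma_general hK₁cpt hK₁pc hK₂cpt hK₂pc (hF₁ ▸ mapsTo_image _ _) (hF₂ ▸ mapsTo_image _ _)
    hF₁cpt hF₂cpt hF₁pc hF₂pc hcap h0₁ h0₂ hfiber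

end
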